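/- arXiv:1302.3751 — 4 statements merged into one kernel-verified Lean document; each statement's English description precedes it below -/
import Mathlib

section
/- Let n∈ℕ, L>0 and ρ>1 with ρ≥L+1, and let φ:ℝⁿ→ℝⁿ be a ρ-diffeomorphism. Then there exists a constant C'>0, independent of ν, m and a, with the following property: whenever ν∈ℕ₀, m∈ℤⁿ, d>1, C>0, κ∈ℝ, and a:ℝⁿ→ℂ is an integrable function with supp a ⊂ d·Q_{ν,m} satisfying |∫_{ℝⁿ} ψ(x)a(x)dx| ≤ C·2^{−νκ}·‖ψ|𝒞^L(ℝⁿ)‖ for every ψ∈𝒞^L(ℝⁿ), then also |∫_{ℝⁿ} ψ(x)·a(φ(x))dx| ≤ C'·C·2^{−νκ}·‖ψ|𝒞^L(ℝⁿ)‖ for every ψ∈𝒞^L(ℝⁿ). -/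
/-!
The substitution `y = φ x` gives `∫ ψ (a ∘ φ) = ∫ Ψ a` with
`Ψ = (|det Dφ|⁻¹ • ψ) ∘ φ⁻¹`, so everything reduces to the estimate
`‖Ψ | 𝒞^L‖ ≤ C' ‖ψ | 𝒞^L‖` with `C'` depending only on `φ`, `L` and `n`.

Hölder balls are handled through the recursive predicate `Hol θ k A f` (order `k + θ`, radius `A`),
which asks for bounds on `f` and, recursively, for `fderiv ℝ f` to lie in the ball of order one less.
In this form the product rule (`Hol.bilinear`), the chain rule (`Hol.comp`) and the formula
`D(T⁻¹) = -T⁻¹ (DT) T⁻¹` (`Hol.ringInverse`) each give a short induction on `k`, linear in the radius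
where this is needed. `MemHolderSpace.hol` and `Hol.memHolderSpace` translate to and from the Hölder
norm, up to a constant.

The lower bound on the Jacobian determinant and the boundedness of `Dφ` bound `(Dφ)⁻¹` by compactness
(`exists_inverse_bound`). Together with the uniform Hölder continuity of `Dφ` this makes the inverse
function theorem uniform, hence `φ` surjective (`surjective_of_uniform`). The relation
`D(φ⁻¹) = (Dφ)⁻¹ ∘ φ⁻¹` bootstraps to the regularity of `φ⁻¹` (`Hol.fderiv_of_eq_comp`), and
`det Dφ` has constant sign, so `|det Dφ|⁻¹` is as regular as `Dφ` (`hol_abs_inv`).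
-/

open MeasureTheory ENNReal
open scoped Classical ENNReal NNReal

noncomputable section

/-- `ℝⁿ` as Euclidean space. -/
abbrev Euc (n : ℕ) := EuclideanSpace ℝ (Fin n)

/-- The Hölder norm `‖f | 𝒞ˢ(ℝⁿ)‖`, valued in `ℝ≥0∞`, with the convention
`s = ⌊s⌋ + {s}`, `⌊s⌋ ∈ ℤ`, `{s} ∈ (0,1]` (so `⌊s⌋ = ⌈s⌉ - 1`).
For `s = 0` it is the sup-norm. -/
noncomputable def holderNorm (n : ℕ) {F : Type*} [NormedAddCommGroup F] [NormedSpace ℝ F]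
    (s : ℝ) (f : Euc n → F) : ℝ≥0∞ :=
  if s = 0 then ⨆ x : Euc n, (‖f x‖₊ : ℝ≥0∞)
  else
    (∑ k ∈ Finset.range ⌈s⌉₊, ⨆ x : Euc n, (‖iteratedFDeriv ℝ k f x‖₊ : ℝ≥0∞)) +
      ⨆ q : Euc n × Euc n,
        if q.1 = q.2 then 0
        else (‖iteratedFDeriv ℝ (⌈s⌉₊ - 1) f q.1 - iteratedFDeriv ℝ (⌈s⌉₊ - 1) f q.2‖₊ : ℝ≥0∞) /
          ENNReal.ofReal (‖q.1 - q.2‖ ^ (s - ((⌈s⌉₊ : ℝ) - 1)))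

/-- The differentiability requirement for membership in `𝒞ˢ(ℝⁿ)`:
`⌊s⌋ = ⌈s⌉ - 1` times continuously differentiable for `s > 0`, continuous for `s = 0`. -/
def holderSmooth (n : ℕ) {F : Type*} [NormedAddCommGroup F] [NormedSpace ℝ F]
    (s : ℝ) (f : Euc n → F) : Prop :=
  (s = 0 → Continuous f) ∧ (s ≠ 0 → ContDiff ℝ ((⌈s⌉₊ - 1 : ℕ) : ℕ∞) f)

/-- Membership in the Hölder space `𝒞ˢ(ℝⁿ)` (bounded continuous functions for `s = 0`). -/
def MemHolderSpace (n : ℕ) {F : Type*} [NormedAddCommGroup F] [NormedSpace ℝ F]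
    (s : ℝ) (f : Euc n → F) : Prop :=
  holderSmooth n s f ∧ holderNorm n s f < ⊤

/-- Axis-parallel closed cube with a given center and side length. -/
def cube (n : ℕ) (center : Fin n → ℝ) (side : ℝ) : Set (Euc n) :=
  {x | ∀ i, |x i - center i| ≤ side / 2}

/-- `d·Q_{ν,m}`: the cube with center `2^{-ν} m` and side length `d·2^{-ν}`. -/
def cubeQ (n : ℕ) (ν : ℕ) (m : Fin n → ℤ) (d : ℝ) : Set (Euc n) :=
  cube n (fun i => (2:ℝ) ^ (-(ν:ℤ)) * (m i : ℝ)) (d * (2:ℝ) ^ (-(ν:ℤ)))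

/-- `a` is an `(s,p)_{K,L}`-atom located at `Q_{ν,m}`, with constants `d > 1`, `C > 0`.
Here `p ∈ (0,∞]` is encoded as an element of `ℝ≥0∞`, so that `1/p = (p⁻¹).toReal`. -/
def IsSpAtom (n : ℕ) (s : ℝ) (p : ℝ≥0∞) (K L d C : ℝ) (ν : ℕ) (m : Fin n → ℤ)
    (a : Euc n → ℂ) : Prop :=
  Function.support a ⊆ cubeQ n ν m d ∧
  holderSmooth n K (fun x => a ((2:ℝ) ^ (-(ν:ℤ)) • x)) ∧
  holderNorm n K (fun x => a ((2:ℝ) ^ (-(ν:ℤ)) • x)) ≤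
    ENNReal.ofReal (C * (2:ℝ) ^ (-(ν:ℝ) * (s - n * (p⁻¹).toReal))) ∧
  ∀ ψ : Euc n → ℂ, MemHolderSpace n L ψ →
    ‖∫ x, ψ x * a x‖ ≤
      C * (2:ℝ) ^ (-(ν:ℝ) * (s + L + n * (1 - (p⁻¹).toReal))) * (holderNorm n L ψ).toReal

/-- `φ : ℝⁿ → ℝⁿ` is a `ρ`-diffeomorphism for `ρ > 1`: it is one-to-one, continuously
differentiable, the partial derivatives `∂φᵢ/∂xⱼ` belong to `𝒞^{ρ-1}(ℝⁿ)` (which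
encodes existence of classical derivatives up to order `⌊ρ⌋`),
and `|det J(φ)(x)| ≥ c > 0` uniformly in `x`. -/
def IsRhoDiffeo (n : ℕ) (ρ : ℝ) (φ : Euc n → Euc n) : Prop :=
  Function.Injective φ ∧ ContDiff ℝ 1 φ ∧
  (∀ i j : Fin n,
    MemHolderSpace n (ρ - 1) (fun x => fderiv ℝ φ x (EuclideanSpace.single j 1) i)) ∧
  ∃ c > (0:ℝ), ∀ x, c ≤ |LinearMap.det (fderiv ℝ φ x).toLinearMap|

/-! ### A recursive form of Hölder classes -/

/-- The ball of radius `A` in the Hölder class of order `k + θ`, set up by recursion on `k`: the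
function is bounded by `A` and either (`k = 0`) is `θ`-Hölder with constant `A`, or its Fréchet
derivative, as an operator-valued function, lies in the class of order `k - 1 + θ`. -/
def Hol {E : Type} [NormedAddCommGroup E] [NormedSpace ℝ E] (θ : ℝ) :
    ∀ (_ : ℕ) {F : Type} [NormedAddCommGroup F] [NormedSpace ℝ F] (_ : ℝ) (_ : E → F), Prop
  | 0, _, _, _, A, f => (∀ x, ‖f x‖ ≤ A) ∧ ∀ x y, ‖f x - f y‖ ≤ A * ‖x - y‖ ^ θ
  | k + 1, _, _, _, A, f => (∀ x, ‖f x‖ ≤ A) ∧ Differentiable ℝ f ∧ Hol θ k A (fderiv ℝ f)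

/-- Interpolation between the trivial bound `2A` at large distances and the `η`-Hölder bound at
small ones. -/
theorem Hol.holder_interp {E F : Type} [NormedAddCommGroup E] [NormedAddCommGroup F] {A θ η : ℝ}
    {f : E → F} (hθ : 0 < θ) (hθη : θ ≤ η)
    (hb : ∀ x, ‖f x‖ ≤ A) (hh : ∀ x y, ‖f x - f y‖ ≤ A * ‖x - y‖ ^ η) (x y : E) :
    ‖f x - f y‖ ≤ 2 * A * ‖x - y‖ ^ θ := by
  have hA : 0 ≤ A := (norm_nonneg _).trans (hb 0)
  rcases le_total ‖x - y‖ 1 with h1 | h1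
  · have h2 : ‖x - y‖ ^ η ≤ ‖x - y‖ ^ θ := by
      rcases eq_or_lt_of_le (norm_nonneg (x - y)) with h0 | h0
      · rw [← h0, Real.zero_rpow hθ.ne', Real.zero_rpow (hθ.trans_le hθη).ne']
      · exact Real.rpow_le_rpow_of_exponent_ge h0 h1 hθη
    calc ‖f x - f y‖ ≤ A * ‖x - y‖ ^ η := hh x y
      _ ≤ A * ‖x - y‖ ^ θ := by gcongr
      _ ≤ 2 * A * ‖x - y‖ ^ θ := by gcongr; linarith
  · have h2 : 1 ≤ ‖x - y‖ ^ θ := Real.one_le_rpow h1 hθ.le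
    calc ‖f x - f y‖ ≤ ‖f x‖ + ‖f y‖ := norm_sub_le _ _
      _ ≤ 2 * A * 1 := by linarith [hb x, hb y]
      _ ≤ 2 * A * ‖x - y‖ ^ θ := by gcongr

namespace Hol

variable {E : Type} [NormedAddCommGroup E] [NormedSpace ℝ E] {θ : ℝ} {k : ℕ}
variable {F G H : Type} [NormedAddCommGroup F] [NormedSpace ℝ F] [NormedAddCommGroup G]
  [NormedSpace ℝ G] [NormedAddCommGroup H] [NormedSpace ℝ H]

theorem bound {A : ℝ} {f : E → F} (h : Hol θ k A f) (x : E) : ‖f x‖ ≤ A := by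
  cases k with
  | zero => exact h.1 x
  | succ k => exact h.1 x

theorem nonneg {A : ℝ} {f : E → F} (h : Hol θ k A f) : 0 ≤ A :=
  (norm_nonneg _).trans (h.bound 0)

theorem mono {A B : ℝ} {f : E → F} (h : Hol θ k A f) (hAB : A ≤ B) : Hol θ k B f := by
  induction k generalizing F with
  | zero =>
    refine ⟨fun x => (h.1 x).trans hAB, fun x y => (h.2 x y).trans ?_⟩
    gcongr
  | succ k ih => exact ⟨fun x => (h.1 x).trans hAB, h.2.1, ih h.2.2⟩

theorem lipschitz_of_fderiv {A : ℝ} {f : E → F} (hf : Differentiable ℝ f)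
    (hb : ∀ x, ‖fderiv ℝ f x‖ ≤ A) (x y : E) : ‖f x - f y‖ ≤ A * ‖x - y‖ :=
  convex_univ.norm_image_sub_le_of_norm_fderiv_le (fun z _ => hf z) (fun z _ => hb z)
    (Set.mem_univ y) (Set.mem_univ x)

theorem exponent_anti {A η : ℝ} {f : E → F} (h : Hol η k A f) (hθ : 0 < θ) (hθη : θ ≤ η) :
    Hol θ k (2 * A) f := by
  have hA := h.nonneg
  induction k generalizing F with
  | zero => exact ⟨fun x => (h.1 x).trans (by linarith), holder_interp hθ hθη h.1 h.2⟩
  | succ k ih => exact ⟨fun x => (h.1 x).trans (by linarith), h.2.1, ih h.2.2⟩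

/-- One more derivative dominates every fractional part `θ ∈ (0,1]`. -/
theorem of_succ {A η : ℝ} {f : E → F} (h : Hol η (k + 1) A f) (hθ : 0 < θ) (hθ1 : θ ≤ 1) :
    Hol θ k (2 * A) f := by
  have hA := h.nonneg
  induction k generalizing F with
  | zero =>
    refine ⟨fun x => (h.1 x).trans (by linarith), holder_interp hθ hθ1 h.1 fun x y => ?_⟩
    simpa using lipschitz_of_fderiv h.2.1 h.2.2.1 x y
  | succ k ih => exact ⟨fun x => (h.1 x).trans (by linarith), h.2.1, ih h.2.2⟩

theorem exists_of_le {η A : ℝ} {f : E → F} {j : ℕ} (hθ : 0 < θ) (hθ1 : θ ≤ 1)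
    (hjk : j ≤ k) (hη : j = k → θ ≤ η) (h : Hol η k A f) : ∃ B, Hol θ j B f := by
  induction k generalizing A η with
  | zero =>
    obtain rfl : j = 0 := by omega
    exact ⟨_, h.exponent_anti hθ (hη rfl)⟩
  | succ k ih =>
    rcases eq_or_lt_of_le hjk with rfl | hlt
    · exact ⟨_, h.exponent_anti hθ (hη rfl)⟩
    · exact ih (by omega) (fun _ => le_rfl) (h.of_succ hθ hθ1)

/-! ### Calculus in Hölder classes -/

theorem const (c : F) : Hol θ k ‖c‖ (fun _ : E => c) := by
  have hz : ∀ (k : ℕ) (F : Type) [NormedAddCommGroup F] [NormedSpace ℝ F] (B : ℝ), 0 ≤ B →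
      Hol θ k B (fun _ : E => (0 : F)) := by
    intro k
    induction k with
    | zero => exact fun F _ _ B hB => ⟨by simpa using hB, fun x y => by
        simpa using mul_nonneg hB (Real.rpow_nonneg (norm_nonneg _) _)⟩
    | succ k ih =>
      intro F _ _ B hB
      refine ⟨by simpa using hB, differentiable_const _, ?_⟩
      have : fderiv ℝ (fun _ : E => (0 : F)) = fun _ => 0 := by ext; simp
      rw [this]
      exact ih _ B hB
  cases k with
  | zero => exact ⟨fun _ => le_rfl, fun x y => by
      simpa using mul_nonneg (norm_nonneg c) (Real.rpow_nonneg (norm_nonneg _) _)⟩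
  | succ k =>
    refine ⟨fun _ => le_rfl, differentiable_const _, ?_⟩
    have : fderiv ℝ (fun _ : E => c) = fun _ => 0 := by ext; simp
    rw [this]
    exact hz _ _ _ (norm_nonneg _)

theorem add {A B : ℝ} {f g : E → F} (hf : Hol θ k A f) (hg : Hol θ k B g) :
    Hol θ k (A + B) (fun x => f x + g x) := by
  induction k generalizing F with
  | zero =>
    refine ⟨fun x => (norm_add_le _ _).trans (add_le_add (hf.1 x) (hg.1 x)), fun x y => ?_⟩
    rw [add_sub_add_comm, add_mul]
    exact (norm_add_le _ _).trans (add_le_add (hf.2 x y) (hg.2 x y))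
  | succ k ih =>
    refine ⟨fun x => (norm_add_le _ _).trans (add_le_add (hf.1 x) (hg.1 x)),
      hf.2.1.add hg.2.1, ?_⟩
    have : fderiv ℝ (fun x => f x + g x) = fun x => fderiv ℝ f x + fderiv ℝ g x := by
      ext1 x; exact fderiv_add (hf.2.1 x) (hg.2.1 x)
    rw [this]
    exact ih hf.2.2 hg.2.2

theorem bilinear_bound (T : F →L[ℝ] G →L[ℝ] H) {A B : ℝ} {a : F} {b : G} (ha : ‖a‖ ≤ A)
    (hb : ‖b‖ ≤ B) : ‖T a b‖ ≤ ‖T‖ * (A * B) := by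
  have := (norm_nonneg a).trans ha
  calc ‖T a b‖ ≤ ‖T‖ * ‖a‖ * ‖b‖ := T.le_opNorm₂ a b
    _ ≤ ‖T‖ * A * B := by gcongr
    _ = _ := by ring

/-- Bounded bilinear maps send products of Hölder classes to Hölder classes, with a bilinear
estimate; the Leibniz rule expresses the derivative through two further bilinear maps. -/
theorem bilinear (hθ : 0 < θ) (hθ1 : θ ≤ 1) (T : F →L[ℝ] G →L[ℝ] H) :
    ∃ K, 0 ≤ K ∧ ∀ (A B : ℝ) (f : E → F) (g : E → G), Hol θ k A f → Hol θ k B g →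
      Hol θ k (K * (A * B)) (fun x => T (f x) (g x)) := by
  induction k generalizing F G H with
  | zero =>
    refine ⟨2 * ‖T‖, by positivity, fun A B f g hf hg => ?_⟩
    have hA := hf.nonneg
    have hB := hg.nonneg
    refine ⟨fun x => (bilinear_bound T (hf.1 x) (hg.1 x)).trans ?_, fun x y => ?_⟩
    · have : 0 ≤ ‖T‖ * (A * B) := by positivity
      linarith
    · have e : T (f x) (g x) - T (f y) (g y) = T (f x - f y) (g x) + T (f y) (g x - g y) := by
        simp
      rw [e]
      refine (norm_add_le _ _).trans ((add_le_add (bilinear_bound T (hf.2 x y) (hg.1 x))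
        (bilinear_bound T (hf.1 y) (hg.2 x y))).trans (le_of_eq ?_))
      ring
  | succ k ih =>
    obtain ⟨K₁, hK₁, h₁⟩ := ih (T.precompR E)
    obtain ⟨K₂, hK₂, h₂⟩ := ih (T.precompL E)
    refine ⟨‖T‖ + 2 * K₁ + 2 * K₂, by positivity, fun A B f g hf hg => ?_⟩
    have hA := hf.nonneg
    have hB := hg.nonneg
    have hAB := mul_nonneg hA hB
    refine ⟨fun x => (bilinear_bound T (hf.1 x) (hg.1 x)).trans ?_, ?_, ?_⟩
    · gcongr
      linarith
    · exact fun x => (T.hasFDerivAt_of_bilinear (hf.2.1 x).hasFDerivAt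
        (hg.2.1 x).hasFDerivAt).differentiableAt
    · have e : fderiv ℝ (fun x => T (f x) (g x)) = fun x =>
          T.precompR E (f x) (fderiv ℝ g x) + T.precompL E (fderiv ℝ f x) (g x) := by
        ext1 x
        exact T.fderiv_of_bilinear (hf.2.1 x) (hg.2.1 x)
      rw [e]
      refine ((h₁ _ _ _ _ (hf.of_succ hθ hθ1) hg.2.2).add
        (h₂ _ _ _ _ hf.2.2 (hg.of_succ hθ hθ1))).mono ?_
      have := mul_nonneg (norm_nonneg T) hAB
      nlinarith

theorem clm (hθ : 0 < θ) (hθ1 : θ ≤ 1) (T : F →L[ℝ] G) {A : ℝ} {f : E → F}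
    (hf : Hol θ k A f) : ∃ B, Hol θ k B (fun x => T (f x)) := by
  obtain ⟨K, -, h⟩ := bilinear (E := E) (k := k) hθ hθ1 (ContinuousLinearMap.id ℝ (F →L[ℝ] G))
  exact ⟨_, h _ _ _ _ (const T) hf⟩

theorem sum {ι : Type} (s : Finset ι) (f : ι → E → F)
    (hf : ∀ i, ∃ A, Hol θ k A (f i)) : ∃ A, Hol θ k A (fun x => ∑ i ∈ s, f i x) := by
  induction s using Finset.induction_on with
  | empty => exact ⟨_, by simpa using const (0 : F)⟩
  | insert i s hi ih =>
    obtain ⟨A, hA⟩ := ih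
    obtain ⟨B, hB⟩ := hf i
    exact ⟨_, by simpa [Finset.sum_insert hi] using hB.add hA⟩

theorem prod (hθ : 0 < θ) (hθ1 : θ ≤ 1) {ι : Type} (s : Finset ι) (f : ι → E → ℝ)
    (hf : ∀ i, ∃ A, Hol θ k A (f i)) : ∃ A, Hol θ k A (fun x => ∏ i ∈ s, f i x) := by
  induction s using Finset.induction_on with
  | empty => exact ⟨_, by simpa using const (1 : ℝ)⟩
  | insert i s hi ih =>
    obtain ⟨A, hA⟩ := ih
    obtain ⟨B, hB⟩ := hf i
    obtain ⟨K, -, h⟩ := bilinear (E := E) (k := k) hθ hθ1 (ContinuousLinearMap.mul ℝ ℝ)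
    exact ⟨_, by simpa [Finset.prod_insert hi] using h _ _ _ _ hB hA⟩

/-- Composition with a Lipschitz map whose derivative is one order less regular than required of
the composite; the operator norm of `f ↦ f ∘ φ` is controlled by `φ` alone. -/
theorem comp (hθ : 0 < θ) (hθ1 : θ ≤ 1) {φ : E → E} {B : ℝ} (hB : 0 ≤ B)
    (hφ : ∀ x y, ‖φ x - φ y‖ ≤ B * ‖x - y‖) (hd : Differentiable ℝ φ)
    (hD : ∀ j < k, ∃ A, Hol θ j A (fderiv ℝ φ)) :
    ∃ K, 0 ≤ K ∧ ∀ (A : ℝ) (f : E → F), Hol θ k A f → Hol θ k (K * A) (fun x => f (φ x)) := by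
  induction k generalizing F with
  | zero =>
    refine ⟨1 + B ^ θ, by positivity, fun A f hf => ?_⟩
    have hA := hf.nonneg
    have hBθ : 0 ≤ B ^ θ := by positivity
    refine ⟨fun x => (hf.1 _).trans (by nlinarith), fun x y => (hf.2 _ _).trans ?_⟩
    calc A * ‖φ x - φ y‖ ^ θ ≤ A * (B * ‖x - y‖) ^ θ := by gcongr; exact hφ x y
      _ = (B ^ θ) * A * ‖x - y‖ ^ θ := by rw [Real.mul_rpow hB (norm_nonneg _)]; ring
      _ ≤ (1 + B ^ θ) * A * ‖x - y‖ ^ θ := by gcongr; linarith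
  | succ k ih =>
    obtain ⟨K, hK, h⟩ := ih (F := E →L[ℝ] F) (fun j hj => hD j (by omega))
    obtain ⟨C, hC⟩ := hD k (by omega)
    obtain ⟨K', hK', h'⟩ := bilinear (E := E) (k := k) hθ hθ1 (ContinuousLinearMap.compL ℝ E E F)
    have hC0 := hC.nonneg
    refine ⟨1 + K' * (K * C), by positivity, fun A f hf => ?_⟩
    have hA := hf.nonneg
    have hp : 0 ≤ K' * (K * C) * A := by positivity
    refine ⟨fun x => (hf.1 _).trans (by linarith), hf.2.1.comp hd, ?_⟩
    have e : fderiv ℝ (fun x => f (φ x)) = fun x =>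
        ContinuousLinearMap.compL ℝ E E F (fderiv ℝ f (φ x)) (fderiv ℝ φ x) := by
      ext1 x
      exact fderiv_comp x (hf.2.1 _) (hd x)
    rw [e]
    refine (h' _ _ _ _ (h _ _ hf.2.2) hC).mono ?_
    linarith

/-- Inversion preserves Hölder classes of ring-valued functions when the inverses are uniformly
bounded, since `D(T⁻¹) = -T⁻¹ (DT) T⁻¹`. -/
theorem ringInverse (hθ : 0 < θ) (hθ1 : θ ≤ 1) {R : Type} [NormedRing R] [NormedAlgebra ℝ R]
    [HasSummableGeomSeries R] {T : E → R} {A m : ℝ} (hT : Hol θ k A T)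
    (hu : ∀ x, IsUnit (T x)) (hm : ∀ x, ‖Ring.inverse (T x)‖ ≤ m) :
    ∃ B, Hol θ k B (fun x => Ring.inverse (T x)) := by
  have hm0 : 0 ≤ m := (norm_nonneg _).trans (hm 0)
  induction k generalizing A with
  | zero =>
    have hA := hT.nonneg
    refine ⟨m + m * A * m, fun x => (hm x).trans ?_, fun x y => ?_⟩
    · have : 0 ≤ m * A * m := by positivity
      linarith
    · have e : Ring.inverse (T x) - Ring.inverse (T y)
          = Ring.inverse (T x) * (T y - T x) * Ring.inverse (T y) := by
        rw [mul_sub, sub_mul, Ring.inverse_mul_cancel _ (hu x), mul_assoc,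
          Ring.mul_inverse_cancel _ (hu y), mul_one, one_mul]
      have hxy : ‖T y - T x‖ ≤ A * ‖x - y‖ ^ θ := by rw [norm_sub_rev]; exact hT.2 x y
      rw [e]
      calc _ ≤ ‖Ring.inverse (T x)‖ * ‖T y - T x‖ * ‖Ring.inverse (T y)‖ := norm_mul₃_le
        _ ≤ m * (A * ‖x - y‖ ^ θ) * m := by gcongr; exacts [hm x, hm y]
        _ = (m * A * m) * ‖x - y‖ ^ θ := by ring
        _ ≤ _ := by gcongr; linarith
  | succ k ih =>
    obtain ⟨B, hB⟩ := ih (hT.of_succ hθ hθ1)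
    obtain ⟨K₁, -, h₁⟩ := bilinear (E := E) (k := k) hθ hθ1
      (-ContinuousLinearMap.mulLeftRight ℝ R)
    obtain ⟨K₂, -, h₂⟩ := bilinear (E := E) (k := k) hθ hθ1 (ContinuousLinearMap.compL ℝ E R R)
    have h := h₂ _ _ _ _ (h₁ _ _ _ _ hB hB) hT.2.2
    have hd : ∀ x, HasFDerivAt (fun x => Ring.inverse (T x))
        (ContinuousLinearMap.compL ℝ E R R ((-ContinuousLinearMap.mulLeftRight ℝ R)
          (Ring.inverse (T x)) (Ring.inverse (T x))) (fderiv ℝ T x)) x := by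
      intro x
      obtain ⟨u, hu'⟩ := hu x
      have h1 := hasFDerivAt_ringInverse (𝕜 := ℝ) u
      have h2 : Ring.inverse (T x) = ↑u⁻¹ := by rw [← hu', Ring.inverse_unit]
      rw [h2]
      rw [hu'] at h1
      exact h1.comp x (hT.2.1 x).hasFDerivAt
    refine ⟨max m (K₂ * (K₁ * (B * B) * A)), fun x => (hm x).trans (le_max_left _ _),
      fun x => (hd x).differentiableAt, ?_⟩
    have e : fderiv ℝ (fun x => Ring.inverse (T x)) = _ := funext fun x => (hd x).fderiv
    rw [e]
    exact h.mono (le_max_right _ _)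

/-- Bootstrapping `Dg = M ∘ g`: the derivative of `g` is as regular as `M`. -/
theorem fderiv_of_eq_comp (hθ : 0 < θ) (hθ1 : θ ≤ 1) {g : E → E} {M : E → E →L[ℝ] E}
    (hg : ∀ y, HasFDerivAt g (M (g y)) y) {A : ℝ} (hM : Hol θ k A M) :
    ∃ B, Hol θ k B (fderiv ℝ g) := by
  have e : fderiv ℝ g = fun y => M (g y) := funext fun y => (hg y).fderiv
  have hd : Differentiable ℝ g := fun y => (hg y).differentiableAt
  induction k using Nat.strong_induction_on generalizing A with
  | _ k ih =>
    obtain ⟨K, -, h⟩ := comp (k := k) (F := E →L[ℝ] E) hθ hθ1 hM.nonneg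
      (lipschitz_of_fderiv hd fun y => by rw [e]; exact hM.bound _) hd (fun j hj => by
        obtain ⟨B, hB⟩ := exists_of_le hθ hθ1 hj.le (fun _ => le_rfl) hM
        exact ih j hj hB)
    exact ⟨_, by rw [e]; exact h _ _ hM⟩

/-- The recursive class described by full derivatives `iteratedFDeriv`. -/
theorem iff_iteratedFDeriv (hθ : 0 < θ) {A : ℝ} {f : E → F} :
    Hol θ k A f ↔ ContDiff ℝ k f ∧ (∀ j ≤ k, ∀ x, ‖iteratedFDeriv ℝ j f x‖ ≤ A) ∧
      ∀ x y, ‖iteratedFDeriv ℝ k f x - iteratedFDeriv ℝ k f y‖ ≤ A * ‖x - y‖ ^ θ := by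
  induction k generalizing F with
  | zero =>
    have e : ∀ x y, ‖iteratedFDeriv ℝ 0 f x - iteratedFDeriv ℝ 0 f y‖ = ‖f x - f y‖ := by
      intro x y
      rw [iteratedFDeriv_zero_eq_comp, Function.comp_apply, Function.comp_apply, ← map_sub,
        LinearIsometryEquiv.norm_map]
    simp only [e]
    constructor
    · rintro ⟨h1, h2⟩
      refine ⟨?_, fun j hj x => ?_, h2⟩
      · have : Continuous f := by
          refine continuous_iff_continuousAt.2 fun y => tendsto_iff_norm_sub_tendsto_zero.2 ?_
          have hlim : Filter.Tendsto (fun x => A * ‖x - y‖ ^ θ) (nhds y) (nhds 0) := by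
            have hc : Continuous fun x : E => A * ‖x - y‖ ^ θ :=
              continuous_const.mul ((continuous_id.sub continuous_const).norm.rpow_const
                fun _ => Or.inr hθ.le)
            simpa [Real.zero_rpow hθ.ne'] using hc.tendsto y
          exact squeeze_zero (fun _ => norm_nonneg _) (fun x => h2 x y) hlim
        simpa using this
      · obtain rfl : j = 0 := by omega
        simpa using h1 x
    · rintro ⟨-, h1, h2⟩
      exact ⟨fun x => by simpa using h1 0 le_rfl x, h2⟩
  | succ k ih =>
    have e : ∀ x y, ‖iteratedFDeriv ℝ (k + 1) f x - iteratedFDeriv ℝ (k + 1) f y‖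
        = ‖iteratedFDeriv ℝ k (fderiv ℝ f) x - iteratedFDeriv ℝ k (fderiv ℝ f) y‖ := by
      intro x y
      rw [iteratedFDeriv_succ_eq_comp_right, iteratedFDeriv_succ_eq_comp_right,
        Function.comp_apply, Function.comp_apply]
      rw [← dist_eq_norm, ← dist_eq_norm]
      exact (continuousMultilinearCurryRightEquiv' ℝ k E F).symm.dist_map _ _
    have hc : ContDiff ℝ ((k + 1 : ℕ) : WithTop ℕ∞) f ↔
        Differentiable ℝ f ∧ ContDiff ℝ (k : WithTop ℕ∞) (fderiv ℝ f) := by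
      rw [Nat.cast_add, Nat.cast_one, contDiff_succ_iff_fderiv]
      simp
    rw [hc]
    simp only [e]
    constructor
    · rintro ⟨h1, h2, h3⟩
      obtain ⟨h4, h5, h6⟩ := ih.1 h3
      refine ⟨⟨h2, h4⟩, fun j hj x => ?_, h6⟩
      cases j with
      | zero => simpa using h1 x
      | succ j =>
        rw [← norm_iteratedFDeriv_fderiv]
        exact h5 j (by omega) x
    · rintro ⟨⟨h2, h4⟩, h5, h6⟩
      refine ⟨fun x => by simpa using h5 0 (by omega) x, h2, ih.2 ⟨h4, fun j hj x => ?_, h6⟩⟩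
      rw [norm_iteratedFDeriv_fderiv]
      exact h5 (j + 1) (by omega) x

end Hol

/-! ### Comparison with the Hölder norm -/

theorem fracPart_pos {s : ℝ} (hs : 0 < s) : 0 < s - ((⌈s⌉₊ : ℝ) - 1) := by
  linarith [Nat.ceil_lt_add_one hs.le]

theorem fracPart_le_one (s : ℝ) : s - ((⌈s⌉₊ : ℝ) - 1) ≤ 1 := by
  linarith [Nat.le_ceil s]

theorem MemHolderSpace.hol {n : ℕ} {F : Type} [NormedAddCommGroup F] [NormedSpace ℝ F] {s : ℝ}
    (hs : 0 < s) {f : Euc n → F} (hf : MemHolderSpace n s f) :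
    Hol (s - ((⌈s⌉₊ : ℝ) - 1)) (⌈s⌉₊ - 1) (holderNorm n s f).toReal f := by
  obtain ⟨⟨-, hsm⟩, hfin⟩ := hf
  have hceil : 0 < ⌈s⌉₊ := Nat.ceil_pos.2 hs
  refine (Hol.iff_iteratedFDeriv (fracPart_pos hs)).2
    ⟨by exact_mod_cast hsm hs.ne', fun j hj x => ?_, fun x y => ?_⟩
  · have h : (‖iteratedFDeriv ℝ j f x‖₊ : ℝ≥0∞) ≤ holderNorm n s f := by
      rw [holderNorm, if_neg hs.ne']
      refine le_trans ?_ le_self_add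
      refine le_trans ?_ (Finset.single_le_sum (f := fun k => ⨆ x : Euc n,
        (‖iteratedFDeriv ℝ k f x‖₊ : ℝ≥0∞)) (fun _ _ => zero_le)
        (Finset.mem_range.2 (by omega : j < ⌈s⌉₊)))
      exact le_iSup (fun x : Euc n => (‖iteratedFDeriv ℝ j f x‖₊ : ℝ≥0∞)) x
    simpa using ENNReal.toReal_mono hfin.ne h
  · rcases eq_or_ne x y with rfl | hxy
    · simp only [sub_self, norm_zero]
      exact mul_nonneg ENNReal.toReal_nonneg (Real.rpow_nonneg le_rfl _)
    · have hp : 0 < ‖x - y‖ ^ (s - ((⌈s⌉₊ : ℝ) - 1)) :=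
        Real.rpow_pos_of_pos (norm_pos_iff.2 (sub_ne_zero.2 hxy)) _
      have h : (‖iteratedFDeriv ℝ (⌈s⌉₊ - 1) f x - iteratedFDeriv ℝ (⌈s⌉₊ - 1) f y‖₊ : ℝ≥0∞) /
          ENNReal.ofReal (‖x - y‖ ^ (s - ((⌈s⌉₊ : ℝ) - 1))) ≤ holderNorm n s f := by
        rw [holderNorm, if_neg hs.ne']
        refine le_trans ?_ le_add_self
        refine le_trans (le_of_eq ?_) (le_iSup _ (x, y))
        rw [if_neg hxy]
      have h' := ENNReal.toReal_mono hfin.ne h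
      rw [ENNReal.toReal_div, ENNReal.toReal_ofReal hp.le, div_le_iff₀ hp] at h'
      simpa using h'

theorem Hol.memHolderSpace {n : ℕ} {F : Type} [NormedAddCommGroup F] [NormedSpace ℝ F] {s : ℝ}
    (hs : 0 < s) {f : Euc n → F} {A : ℝ}
    (hf : Hol (s - ((⌈s⌉₊ : ℝ) - 1)) (⌈s⌉₊ - 1) A f) :
    MemHolderSpace n s f ∧ (holderNorm n s f).toReal ≤ (⌈s⌉₊ + 1) * A := by
  have hA := hf.nonneg
  have hceil : 0 < ⌈s⌉₊ := Nat.ceil_pos.2 hs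
  obtain ⟨h1, h2, h3⟩ := (Hol.iff_iteratedFDeriv (fracPart_pos hs)).1 hf
  have hle : holderNorm n s f ≤ ENNReal.ofReal ((⌈s⌉₊ + 1) * A) := by
    rw [holderNorm, if_neg hs.ne', add_mul, one_mul, ENNReal.ofReal_add (by positivity) hA]
    refine add_le_add ?_ (iSup_le ?_)
    · refine (Finset.sum_le_card_nsmul _ _ (ENNReal.ofReal A) fun k hk => iSup_le fun x => ?_).trans
        (le_of_eq ?_)
      · rw [← enorm_eq_nnnorm, ← ofReal_norm]
        exact ENNReal.ofReal_le_ofReal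
          (h2 k (by have := Finset.mem_range.1 hk; omega) x)
      · rw [Finset.card_range, nsmul_eq_mul, ENNReal.ofReal_mul (by positivity),
          ENNReal.ofReal_natCast]
    · rintro ⟨x, y⟩
      dsimp only
      split_ifs with hxy
      · exact zero_le
      · have hp : 0 < ‖x - y‖ ^ (s - ((⌈s⌉₊ : ℝ) - 1)) :=
          Real.rpow_pos_of_pos (norm_pos_iff.2 (sub_ne_zero.2 hxy)) _
        refine ENNReal.div_le_of_le_mul ?_
        rw [← ENNReal.ofReal_mul hA, ← enorm_eq_nnnorm, ← ofReal_norm]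
        exact ENNReal.ofReal_le_ofReal (h3 x y)
  refine ⟨⟨⟨fun h => absurd h hs.ne', fun _ => by exact_mod_cast h1⟩,
    hle.trans_lt ENNReal.ofReal_lt_top⟩, ?_⟩
  exact ENNReal.toReal_le_of_le_ofReal (by positivity) hle

/-! ### Regularity of the diffeomorphism and of its inverse -/

/-- Operators with bounded norm and determinant bounded away from zero form a compact set of units,
on which inversion is continuous and hence bounded. -/
theorem exists_inverse_bound {E : Type} [NormedAddCommGroup E] [NormedSpace ℝ E]
    [FiniteDimensional ℝ E] (A c : ℝ) (hc : 0 < c) :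
    ∃ m, 0 < m ∧ ∀ T : E →L[ℝ] E, ‖T‖ ≤ A → c ≤ |LinearMap.det T.toLinearMap| →
      IsUnit T ∧ ‖Ring.inverse T‖ ≤ m := by
  have hunit : ∀ T : E →L[ℝ] E, c ≤ |LinearMap.det T.toLinearMap| → IsUnit T := by
    intro T hT
    have h0 : LinearMap.det T.toLinearMap ≠ 0 := abs_pos.1 (hc.trans_le hT)
    have h1 : IsUnit T.toLinearMap := LinearMap.isUnit_iff_isUnit_det _ |>.2 h0.isUnit
    exact ContinuousLinearMap.isUnit_iff_bijective.2
      ((Module.End.isUnit_iff _).1 h1)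
  have hcomp : IsCompact (Metric.closedBall (0 : E →L[ℝ] E) A ∩
      {T | c ≤ |LinearMap.det T.toLinearMap|}) := by
    have : ProperSpace (E →L[ℝ] E) := FiniteDimensional.proper ℝ _
    refine (isCompact_closedBall _ _).inter_right (isClosed_le continuous_const ?_)
    exact ContinuousLinearMap.continuous_det.abs
  have hcont : ContinuousOn (fun T : E →L[ℝ] E => Ring.inverse T)
      (Metric.closedBall (0 : E →L[ℝ] E) A ∩ {T | c ≤ |LinearMap.det T.toLinearMap|}) := by
    have : CompleteSpace E := FiniteDimensional.complete ℝ E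
    rintro T ⟨-, hT⟩
    obtain ⟨u, rfl⟩ := hunit T hT
    exact (NormedRing.inverse_continuousAt u).continuousWithinAt
  obtain ⟨m, hm⟩ := hcomp.exists_bound_of_continuousOn hcont
  refine ⟨max m 1, by positivity, fun T hT hd => ⟨hunit T hd, ?_⟩⟩
  exact (hm T ⟨by simpa using hT, hd⟩).trans (le_max_left _ _)

/-- A `C¹` map whose derivative is uniformly Hölder and has uniformly bounded inverses is onto: the
quantitative inverse function theorem puts a ball of fixed radius around each point of the range
inside the range, so the range is closed as well as open. -/
theorem surjective_of_uniform {E : Type} [NormedAddCommGroup E] [NormedSpace ℝ E]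
    [CompleteSpace E] {φ : E → E} {θ A m : ℝ} (hθ : 0 < θ) (hm : 0 < m)
    (hd : Differentiable ℝ φ) (hA : Hol θ 0 A (fderiv ℝ φ)) (hu : ∀ x, IsUnit (fderiv ℝ φ x))
    (hinv : ∀ x, ‖Ring.inverse (fderiv ℝ φ x)‖ ≤ m) : Function.Surjective φ := by
  obtain ⟨r, hr, hrA⟩ : ∃ r > 0, A * r ^ θ ≤ (2 * m)⁻¹ := by
    have hlim : Filter.Tendsto (fun r : ℝ => A * r ^ θ) (nhds 0) (nhds 0) := by
      have hc : Continuous fun r : ℝ => A * r ^ θ :=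
        continuous_const.mul (continuous_id.rpow_const fun _ => Or.inr hθ.le)
      simpa [Real.zero_rpow hθ.ne'] using hc.tendsto 0
    have hev := hlim.eventually (gt_mem_nhds (by positivity : (0 : ℝ) < (2 * m)⁻¹))
    obtain ⟨ε, hε, h⟩ := Metric.eventually_nhds_iff.1 hev
    refine ⟨ε / 2, by positivity, (h ?_).le⟩
    rw [Real.dist_0_eq_abs, abs_of_pos (by positivity)]
    linarith
  have hA0 := hA.nonneg
  have hball : ∀ x, Metric.closedBall (φ x) ((2 * m)⁻¹ * r) ⊆ Set.range φ := by
    intro x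
    have happ : ApproximatesLinearOn φ (fderiv ℝ φ x) (Metric.closedBall x r)
        (Real.toNNReal (2 * m)⁻¹) := by
      intro y hy z hz
      rw [Real.coe_toNNReal _ (by positivity)]
      refine (convex_closedBall x r).norm_image_sub_le_of_norm_hasFDerivWithin_le'
        (fun w _ => (hd w).hasFDerivAt.hasFDerivWithinAt) (fun w hw => ?_) hz hy
      refine (hA.2 w x).trans (le_trans ?_ hrA)
      gcongr
      simpa [dist_eq_norm] using hw
    let R : (fderiv ℝ φ x).NonlinearRightInverse :=
      { toFun := fun y => (Ring.inverse (fderiv ℝ φ x) : E →L[ℝ] E) y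
        nnnorm := Real.toNNReal m
        bound' := fun y => by
          rw [Real.coe_toNNReal _ hm.le]
          exact (ContinuousLinearMap.le_opNorm _ y).trans (by gcongr; exact hinv x)
        right_inv' := fun y => by
          have := Ring.mul_inverse_cancel _ (hu x)
          exact congrArg (fun T : E →L[ℝ] E => T y) this }
    have hs := happ.surjOn_closedBall_of_nonlinearRightInverse R hr.le subset_rfl
    have e : ((R.nnnorm : ℝ)⁻¹ - (Real.toNNReal (2 * m)⁻¹ : ℝ)) * r = (2 * m)⁻¹ * r := by
      change ((Real.toNNReal m : ℝ)⁻¹ - _) * r = _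
      rw [Real.coe_toNNReal _ hm.le, Real.coe_toNNReal _ (by positivity)]
      field_simp
      ring
    rw [e] at hs
    intro y hy
    obtain ⟨z, -, hz⟩ := hs hy
    exact ⟨z, hz⟩
  have hδ : 0 < (2 * m)⁻¹ * r := by positivity
  have hopen : IsOpen (Set.range φ) := by
    refine Metric.isOpen_iff.2 ?_
    rintro _ ⟨x, rfl⟩
    exact ⟨_, hδ, Metric.ball_subset_closedBall.trans (hball x)⟩
  have hclosed : IsClosed (Set.range φ) := by
    refine isClosed_of_closure_subset fun y hy => ?_
    obtain ⟨_, ⟨x, rfl⟩, hx⟩ := Metric.mem_closure_iff.1 hy _ hδ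
    exact hball x (Metric.mem_closedBall.2 hx.le)
  exact Set.range_eq_univ.1 (IsClopen.eq_univ ⟨hclosed, hopen⟩ (Set.range_nonempty φ))

/-- The entries of the Jacobian matrix determine the regularity of the operator-valued
derivative. -/
theorem hol_fderiv_of_entries {n k : ℕ} {θ : ℝ} (hθ : 0 < θ) (hθ1 : θ ≤ 1)
    {T : Euc n → Euc n →L[ℝ] Euc n}
    (h : ∀ i j, ∃ A, Hol θ k A (fun x => T x (EuclideanSpace.single j 1) i)) :
    ∃ A, Hol θ k A T := by
  let P : Fin n → Fin n → ℝ →L[ℝ] (Euc n →L[ℝ] Euc n) := fun i j =>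
    ContinuousLinearMap.toSpanSingleton ℝ
      (ContinuousLinearMap.smulRight (EuclideanSpace.proj j : Euc n →L[ℝ] ℝ)
        (EuclideanSpace.single i (1 : ℝ)))
  have e : T = fun x => ∑ i, ∑ j, P i j (T x (EuclideanSpace.single j 1) i) := by
    ext x v l
    have hv : v = ∑ j, v j • (EuclideanSpace.single j (1 : ℝ) : Euc n) := by
      ext i
      simp [Pi.single_apply]
    conv_lhs => rw [hv]
    simp [P, Pi.single_apply, mul_comm]
  rw [e]
  refine Hol.sum _ (fun i x => ∑ j, P i j (T x (EuclideanSpace.single j 1) i)) fun i => ?_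
  refine Hol.sum _ (fun j x => P i j (T x (EuclideanSpace.single j 1) i)) fun j => ?_
  obtain ⟨A, hA⟩ := h i j
  exact hA.clm hθ hθ1 (P i j)

/-- The determinant is a polynomial in the matrix entries. -/
theorem hol_det_of_entries {n k : ℕ} {θ : ℝ} (hθ : 0 < θ) (hθ1 : θ ≤ 1)
    {T : Euc n → Euc n →L[ℝ] Euc n}
    (h : ∀ i j, ∃ A, Hol θ k A (fun x => T x (EuclideanSpace.single j 1) i)) :
    ∃ A, Hol θ k A (fun x => LinearMap.det (T x).toLinearMap) := by
  have e : (fun x => LinearMap.det (T x).toLinearMap) = fun x =>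
      ∑ σ : Equiv.Perm (Fin n), ((Equiv.Perm.sign σ : ℤ) : ℝ) *
        ∏ i, T x (EuclideanSpace.single i 1) (σ i) := by
    ext x
    rw [← LinearMap.det_toMatrix (EuclideanSpace.basisFun (Fin n) ℝ).toBasis, Matrix.det_apply']
    simp [LinearMap.toMatrix_apply]
  rw [e]
  refine Hol.sum _ (fun (σ : Equiv.Perm (Fin n)) x => ((Equiv.Perm.sign σ : ℤ) : ℝ) *
        ∏ i, T x (EuclideanSpace.single i 1) (σ i)) fun σ => ?_
  obtain ⟨A, hA⟩ := Hol.prod hθ hθ1 Finset.univ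
    (fun i x => T x (EuclideanSpace.single i 1) (σ i)) fun i => h (σ i) i
  exact hA.clm hθ hθ1 (ContinuousLinearMap.mul ℝ ℝ ((Equiv.Perm.sign σ : ℤ) : ℝ))

/-- A continuous function bounded away from zero on the connected space `E` keeps its sign, so
`|f|⁻¹` is as regular as `f⁻¹`. -/
theorem hol_abs_inv {E : Type} [NormedAddCommGroup E] [NormedSpace ℝ E] {k : ℕ} {θ A c : ℝ}
    (hθ : 0 < θ) (hθ1 : θ ≤ 1) {f : E → ℝ} (hc : 0 < c) (hf : Hol θ k A f)
    (hcont : Continuous f) (hlow : ∀ x, c ≤ |f x|) : ∃ B, Hol θ k B (fun x => |f x|⁻¹) := by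
  have hne : ∀ x, f x ≠ 0 := fun x => abs_pos.1 (hc.trans_le (hlow x))
  obtain ⟨B, hB⟩ := Hol.ringInverse (m := c⁻¹) hθ hθ1 hf (fun x => (hne x).isUnit) (fun x => by
    rw [Ring.inverse_eq_inv', norm_inv, Real.norm_eq_abs]
    exact inv_anti₀ hc (hlow x))
  have hsign : (∀ x, 0 < f x) ∨ ∀ x, f x < 0 := by
    by_contra! hcon
    obtain ⟨⟨x, hx⟩, y, hy⟩ := hcon
    obtain ⟨z, hz⟩ := mem_range_of_exists_le_of_exists_ge hcont ⟨x, hx⟩ ⟨y, hy⟩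
    exact hne z hz
  rcases hsign with h | h
  · refine ⟨B, ?_⟩
    have e : (fun x => |f x|⁻¹) = fun x => Ring.inverse (f x) := by
      funext x
      rw [abs_of_pos (h x), Ring.inverse_eq_inv']
    rwa [e]
  · obtain ⟨B', hB'⟩ := hB.clm hθ hθ1 (-ContinuousLinearMap.id ℝ ℝ)
    refine ⟨B', ?_⟩
    have e : (fun x => |f x|⁻¹) = fun x => (-ContinuousLinearMap.id ℝ ℝ) (Ring.inverse (f x)) := by
      funext x
      rw [abs_of_neg (h x), Ring.inverse_eq_inv']
      simp [inv_neg]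
    rwa [e]

/-! ### The moment condition under the diffeomorphism -/

/-- The general moment condition is preserved under superposition with a `ρ`-diffeomorphism
`φ`, `ρ ≥ L+1 > 1`: if `a` is integrable, supported in `d·Q_{ν,m}` and satisfies
`|∫ ψ a| ≤ C·2^{-νκ}·‖ψ|𝒞^L‖` for all `ψ ∈ 𝒞^L(ℝⁿ)`, then `a ∘ φ` satisfies the same
condition with `C` replaced by `C'·C`, where `C'` is independent of `ν, m, a`. -/
theorem statement_13 (n : ℕ) (L ρ : ℝ) (hL : 0 < L) (hρ : 1 < ρ) (hρL : L + 1 ≤ ρ)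
    (φ : Euc n → Euc n) (hφ : IsRhoDiffeo n ρ φ) :
    ∃ C' > (0:ℝ), ∀ (ν : ℕ) (m : Fin n → ℤ) (d C κ : ℝ) (a : Euc n → ℂ),
      1 < d → 0 < C → Integrable a volume →
      Function.support a ⊆ cubeQ n ν m d →
      (∀ ψ : Euc n → ℂ, MemHolderSpace n L ψ →
        ‖∫ x, ψ x * a x‖ ≤ C * (2:ℝ) ^ (-(ν:ℝ) * κ) * (holderNorm n L ψ).toReal) →
      ∀ ψ : Euc n → ℂ, MemHolderSpace n L ψ →
        ‖∫ x, ψ x * a (φ x)‖ ≤ C' * C * (2:ℝ) ^ (-(ν:ℝ) * κ) * (holderNorm n L ψ).toReal := by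
  obtain ⟨hinj, hC1, hmem, c, hc, hdet⟩ := hφ
  have hdφ : Differentiable ℝ φ := hC1.differentiable one_ne_zero
  have hθ := fracPart_pos hL
  have hθ1 := fracPart_le_one L
  set θ := L - ((⌈L⌉₊ : ℝ) - 1) with hθdef
  set N := ⌈L⌉₊ - 1 with hN
  have hentry : ∀ i j, ∃ A, Hol θ N A
      (fun x => fderiv ℝ φ x (EuclideanSpace.single j 1) i) := by
    intro i j
    have hle : ⌈L⌉₊ ≤ ⌈ρ - 1⌉₊ := Nat.ceil_le_ceil (by linarith)
    have hL1 : 0 < ⌈L⌉₊ := Nat.ceil_pos.2 hL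
    refine Hol.exists_of_le hθ hθ1 (by omega) (fun h => ?_) ((hmem i j).hol (by linarith))
    have : ⌈L⌉₊ = ⌈ρ - 1⌉₊ := by omega
    rw [hθdef, this]
    linarith
  obtain ⟨A, hA⟩ := hol_fderiv_of_entries hθ hθ1 hentry
  obtain ⟨m₀, hm₀, hinv⟩ := exists_inverse_bound (E := Euc n) A c hc
  have hu : ∀ x, IsUnit (fderiv ℝ φ x) := fun x => (hinv _ (hA.bound x) (hdet x)).1
  have hb : ∀ x, ‖Ring.inverse (fderiv ℝ φ x)‖ ≤ m₀ := fun x =>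
    (hinv _ (hA.bound x) (hdet x)).2
  have hsurj : Function.Surjective φ := by
    obtain ⟨A₀, hA₀⟩ := hA.exists_of_le hθ hθ1 (Nat.zero_le _) (fun _ => le_rfl)
    exact surjective_of_uniform hθ hm₀ hdφ hA₀ hu hb
  let g := Function.surjInv hsurj
  have hφg : ∀ y, φ (g y) = y := Function.surjInv_eq hsurj
  have hgφ : ∀ x, g (φ x) = x := fun x => hinj (hφg (φ x))
  have hg : ∀ y, HasFDerivAt g (Ring.inverse (fderiv ℝ φ (g y))) y := by
    intro y
    obtain ⟨u, hu'⟩ := hu (g y)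
    have hst : HasStrictFDerivAt φ
        ((ContinuousLinearEquiv.unitsEquiv ℝ (Euc n) u : Euc n ≃L[ℝ] Euc n) :
          Euc n →L[ℝ] Euc n) (g y) := by
      have e : ((ContinuousLinearEquiv.unitsEquiv ℝ (Euc n) u : Euc n ≃L[ℝ] Euc n) :
          Euc n →L[ℝ] Euc n) = fderiv ℝ φ (g y) := by rw [← hu']; ext v; rfl
      rw [e]
      exact hC1.contDiffAt.hasStrictFDerivAt one_ne_zero
    have h := (hst.to_local_left_inverse (Filter.Eventually.of_forall hgφ)).hasFDerivAt
    rw [hφg] at h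
    rw [← hu', Ring.inverse_unit]
    exact h
  obtain ⟨A₁, hA₁⟩ := Hol.ringInverse hθ hθ1 hA hu hb
  obtain ⟨A₂, hA₂⟩ := Hol.fderiv_of_eq_comp hθ hθ1 hg hA₁
  have hdg : Differentiable ℝ g := fun y => (hg y).differentiableAt
  obtain ⟨K₁, hK₁, hcomp⟩ := Hol.comp (F := ℂ) (k := N) hθ hθ1 hA₂.nonneg
    (Hol.lipschitz_of_fderiv hdg hA₂.bound) hdg
    (fun j hj => hA₂.exists_of_le hθ hθ1 hj.le (fun _ => le_rfl))
  obtain ⟨A₃, hA₃⟩ := hol_det_of_entries hθ hθ1 hentry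
  obtain ⟨A₄, hA₄⟩ := hol_abs_inv hθ hθ1 hc hA₃
    (ContinuousLinearMap.continuous_det.comp (hC1.continuous_fderiv one_ne_zero)) hdet
  have hA₄0 := hA₄.nonneg
  obtain ⟨K₂, hK₂, hmul⟩ := Hol.bilinear (E := Euc n) (k := N) hθ hθ1
    (ContinuousLinearMap.lsmul ℝ ℝ : ℝ →L[ℝ] ℂ →L[ℝ] ℂ)
  refine ⟨(⌈L⌉₊ + 1) * (K₁ * (K₂ * A₄)) + 1, by positivity, ?_⟩
  intro ν m d C κ a _ hC _ _ hmom ψ hψ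
  -- the test function for `a` produced by the substitution `y = φ x`
  let Ψ : Euc n → ℂ := fun y =>
    |LinearMap.det (fderiv ℝ φ (g y)).toLinearMap|⁻¹ • ψ (g y)
  have hΨ : Hol θ N (K₁ * (K₂ * (A₄ * (holderNorm n L ψ).toReal))) Ψ :=
    hcomp _ _ (hmul _ _ _ _ hA₄ (hψ.hol hL))
  obtain ⟨hΨm, hΨn⟩ := hΨ.memHolderSpace hL
  have hcov : ∫ x, ψ x * a (φ x) = ∫ y, Ψ y * a y := by
    have h := integral_image_eq_integral_abs_det_fderiv_smul (volume : Measure (Euc n))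
      MeasurableSet.univ (fun x _ => (hdφ x).hasFDerivAt.hasFDerivWithinAt) hinj.injOn
      (fun y => Ψ y * a y)
    rw [Set.image_univ, hsurj.range_eq, Measure.restrict_univ] at h
    rw [h]
    refine integral_congr_ae (Filter.Eventually.of_forall fun x => ?_)
    have hx : |LinearMap.det (fderiv ℝ φ x).toLinearMap| ≠ 0 := (hc.trans_le (hdet x)).ne'
    change ψ x * a (φ x) = |LinearMap.det (fderiv ℝ φ x).toLinearMap| •
      ((|LinearMap.det (fderiv ℝ φ (g (φ x))).toLinearMap|⁻¹ • ψ (g (φ x))) * a (φ x))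
    rw [hgφ, smul_mul_assoc, smul_smul, mul_inv_cancel₀ hx, one_smul]
  have hS : 0 ≤ (holderNorm n L ψ).toReal := ENNReal.toReal_nonneg
  have hP : 0 < C * (2:ℝ) ^ (-(ν:ℝ) * κ) := by positivity
  rw [hcov]
  calc ‖∫ y, Ψ y * a y‖ ≤ C * (2:ℝ) ^ (-(ν:ℝ) * κ) * (holderNorm n L Ψ).toReal := hmom Ψ hΨm
    _ ≤ C * (2:ℝ) ^ (-(ν:ℝ) * κ) *
        (((⌈L⌉₊ + 1) * (K₁ * (K₂ * A₄)) + 1) * (holderNorm n L ψ).toReal) := by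
      gcongr
      refine hΨn.trans ?_
      linarith
    _ = _ := by ring
end
end

section
/- Let n∈ℕ, L>0 and d>1. There exists a constant c>0, depending only on n, L and d, such that for every ν∈ℕ₀, every m∈ℤⁿ and every integrable function a:ℝⁿ→ℂ with supp a ⊂ d·Q_{ν,m} and ∫_{ℝⁿ} (x−2^{−ν}m)^β a(x) dx = 0 for all multi-indices β with |β|≤⌊L⌋, the estimate |∫_{ℝⁿ} ψ(x)a(x)dx| ≤ c·2^{−νL}·‖a|L₁(ℝⁿ)‖·‖ψ|𝒞^L(ℝⁿ)‖ holds for every ψ∈𝒞^L(ℝⁿ). -/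
/-! The estimate compares `ψ` with its Taylor polynomial `P` of order `N = ⌈L⌉ - 1` at the center
`x₀ = 2^{-ν} m` of the cube. On the diagonal, each derivative `D^k ψ(x₀)`, `k ≤ N`, is a linear
combination of the monomials `(x - x₀)^β` with `|β| = k` (`multilinear_diag_eq_sum`), so the moment
conditions give `∫ P a = 0` and hence `∫ ψ a = ∫ (ψ - P) a`. The Taylor remainder only needs the
oscillation of `D^N ψ` (`norm_sub_iteratedFDeriv_taylor_le`), which the Hölder seminorm bounds;
thus `|ψ(x) - P(x)| ≤ ‖ψ | 𝒞^L‖ |x - x₀|^{L-N} |x - x₀|^N`. On the support of `a` one has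
`|x - x₀| ≤ (n+1) d 2^{-ν}`, which gives the claim with `c = ((n+1) d)^L`. -/

open MeasureTheory ENNReal
open scoped Classical ENNReal NNReal

noncomputable section

/-! ### Taylor's formula with a Hölder remainder -/

/-- One-dimensional Taylor estimate for a chain `G 0, G 1, …, G N` of successive derivatives on
`[0, 1]`: only the oscillation of the top derivative `G N` enters, so no derivative of order
`N + 1` is needed. -/
lemma norm_sub_taylor_le {E : Type*} [NormedAddCommGroup E] [NormedSpace ℝ E] (N : ℕ) {M : ℝ}
    (G : ℕ → ℝ → E) (hG : ∀ k < N, ∀ t, HasDerivAt (G k) (G (k + 1) t) t)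
    (hM : ∀ t ∈ Set.Icc (0 : ℝ) 1, ‖G N t - G N 0‖ ≤ M) :
    ∀ t ∈ Set.Icc (0 : ℝ) 1,
      ‖G 0 t - ∑ k ∈ Finset.range (N + 1), (t ^ k / k.factorial) • G k 0‖ ≤ M := by
  induction N generalizing G with
  | zero => intro t ht; simpa using hM t ht
  | succ N ih =>
    intro t ht
    have hM0 : 0 ≤ M := (norm_nonneg _).trans (hM t ht)
    have ih' := ih (fun k => G (k + 1)) (fun k hk s => hG (k + 1) (by omega) s) hM
    have hsum : ∀ s : ℝ, HasDerivAt
        (fun s : ℝ => ∑ k ∈ Finset.range (N + 2), (s ^ k / k.factorial) • G k 0)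
        (∑ k ∈ Finset.range (N + 1), (s ^ k / k.factorial) • G (k + 1) 0) s := by
      intro s
      have hfun : (fun s : ℝ => ∑ k ∈ Finset.range (N + 2), (s ^ k / k.factorial) • G k 0) =
          fun s : ℝ => (∑ k ∈ Finset.range (N + 1),
            (s ^ (k + 1) / (k + 1).factorial) • G (k + 1) 0) + G 0 0 := by
        funext s
        rw [Finset.sum_range_succ']
        simp
      rw [hfun]
      refine (HasDerivAt.fun_sum fun k _ => ?_).add_const _
      refine HasDerivAt.smul_const ?_ _
      have h := (hasDerivAt_pow (k + 1) s).div_const ((k + 1).factorial : ℝ)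
      convert h using 1
      have : (k.factorial : ℝ) ≠ 0 := by exact_mod_cast k.factorial_ne_zero
      have : (k : ℝ) + 1 ≠ 0 := by positivity
      rw [Nat.factorial_succ]
      push_cast
      field_simp
    have key := norm_image_sub_le_of_norm_deriv_le_segment' (a := 0) (b := 1) (C := M)
      (f := fun s => G 0 s - ∑ k ∈ Finset.range (N + 2), (s ^ k / k.factorial) • G k 0)
      (fun s _ => ((hG 0 (by omega) s).sub (hsum s)).hasDerivWithinAt)
      (fun s hs => ih' s ⟨hs.1, hs.2.le⟩) t ht
    have h0 : ∑ k ∈ Finset.range (N + 2), ((0 : ℝ) ^ k / k.factorial) • G k 0 = G 0 0 := by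
      rw [Finset.sum_range_succ']
      simp
    simp only [h0, sub_self, sub_zero] at key
    exact key.trans (mul_le_of_le_one_right hM0 ht.2)

/-- Taylor's formula in several variables: the remainder at `x + h` of the Taylor polynomial of
order `N` is controlled by the oscillation of `D^N f` along the segment, measured by `B`. -/
lemma norm_sub_iteratedFDeriv_taylor_le {E F : Type*} [NormedAddCommGroup E] [NormedSpace ℝ E]
    [NormedAddCommGroup F] [NormedSpace ℝ F] (N : ℕ) {f : E → F} (hf : ContDiff ℝ N f)
    (x h : E) {B : ℝ}
    (hB : ∀ t ∈ Set.Icc (0 : ℝ) 1,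
      ‖iteratedFDeriv ℝ N f (x + t • h) - iteratedFDeriv ℝ N f x‖ ≤ B) :
    ‖f (x + h) - ∑ k ∈ Finset.range (N + 1),
      ((k.factorial : ℝ)⁻¹) • iteratedFDeriv ℝ k f x (fun _ => h)‖ ≤ B * ‖h‖ ^ N := by
  have key := norm_sub_taylor_le N (M := B * ‖h‖ ^ N)
    (fun k t => iteratedFDeriv ℝ k f (x + t • h) (fun _ => h)) ?_ ?_ 1 (by simp)
  · simpa using key
  · intro k hk t
    have hfk : ContDiff ℝ (k + 1 : ℕ) f := hf.of_le (by exact_mod_cast hk)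
    have hd : DifferentiableAt ℝ (iteratedFDeriv ℝ k f) (x + t • h) :=
      hf.contDiffAt.differentiableAt_iteratedFDeriv (by exact_mod_cast hk)
    have hd' : DifferentiableAt ℝ
        (fun s : ℝ => iteratedFDeriv ℝ k f (x + s • h) (fun _ => h)) t := by
      have h1 : DifferentiableAt ℝ (fun s : ℝ => iteratedFDeriv ℝ k f (x + s • h)) t :=
        DifferentiableAt.comp (g := iteratedFDeriv ℝ k f) (f := fun s : ℝ => x + s • h) t hd
          (by fun_prop)
      exact h1.continuousMultilinear_apply_const _
    have := hd'.hasDerivAt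
    rwa [ContDiffAt.deriv_fderiv_add_smul (by exact_mod_cast hfk.contDiffAt)] at this
  · intro t ht
    simp only [zero_smul, add_zero, ← sub_apply]
    refine (ContinuousMultilinearMap.le_opNorm _ _).trans ?_
    simp only [Finset.prod_const, Finset.card_univ, Fintype.card_fin]
    gcongr
    exact hB t ht

/-- The Hölder bound on the top derivative contained in `holderNorm`, as an inequality in `ℝ`. -/
lemma holder_iteratedFDeriv_le {n N : ℕ} {L : ℝ} (hL : 0 < L) (hN : ⌈L⌉₊ = N + 1)
    {ψ : Euc n → ℂ} (hψ : holderNorm n L ψ < ⊤) (x y : Euc n) :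
    ‖iteratedFDeriv ℝ N ψ x - iteratedFDeriv ℝ N ψ y‖ ≤
      (holderNorm n L ψ).toReal * ‖x - y‖ ^ (L - N) := by
  rcases eq_or_ne x y with rfl | hxy
  · simp only [sub_self, norm_zero]
    positivity
  have hpos : 0 < ‖x - y‖ ^ (L - N) := Real.rpow_pos_of_pos (norm_pos_iff.2 (sub_ne_zero.2 hxy)) _
  have h1 : (‖iteratedFDeriv ℝ N ψ x - iteratedFDeriv ℝ N ψ y‖₊ : ℝ≥0∞) /
      ENNReal.ofReal (‖x - y‖ ^ (L - N)) ≤ holderNorm n L ψ := by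
    rw [holderNorm, if_neg hL.ne', hN]
    refine le_add_left ?_
    refine le_trans (le_of_eq ?_) (le_iSup _ (x, y))
    simp [hxy]
  have h2 := ENNReal.toReal_mono hψ.ne h1
  rw [ENNReal.toReal_div, ENNReal.toReal_ofReal hpos.le, div_le_iff₀ hpos] at h2
  simpa using h2

/-! ### Vanishing moments -/

lemma integrable_mul_of_support {n : ℕ} {a φ : Euc n → ℂ} (ha : Integrable a volume)
    {K : Set (Euc n)} (hK : IsCompact K) (hsupp : Function.support a ⊆ K) (hφ : Continuous φ) :
    Integrable (fun x => φ x * a x) volume := by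
  obtain ⟨C, hC⟩ := hK.exists_bound_of_continuousOn hφ.continuousOn
  refine (ha.norm.const_mul C).mono' (hφ.aestronglyMeasurable.mul ha.1) (ae_of_all _ fun x => ?_)
  by_cases hx : a x = 0
  · simp [hx]
  · rw [norm_mul]
    exact mul_le_mul_of_nonneg_right (hC x (hsupp hx)) (norm_nonneg _)

/-- On the diagonal, a `k`-linear form on `ℝⁿ` is a homogeneous polynomial of degree `k`: it is a
sum of monomials, indexed here by words `r : Fin k → Fin n` whose letter counts are the
exponents. -/
lemma multilinear_diag_eq_sum {n k : ℕ}
    (T : ContinuousMultilinearMap ℝ (fun _ : Fin k => Euc n) ℂ) (h : Euc n) :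
    T (fun _ => h) = ∑ r : Fin k → Fin n,
      T (fun i => EuclideanSpace.single (r i) (1 : ℝ)) *
        ∏ j, ((h j : ℝ) : ℂ) ^ (Finset.univ.filter fun i => r i = j).card := by
  have hh : h = ∑ j, h j • EuclideanSpace.single j (1 : ℝ) := by
    ext i
    simp [Finset.sum_apply, Pi.single_apply]
  conv_lhs => rw [hh]
  rw [T.map_sum]
  refine Finset.sum_congr rfl fun r _ => ?_
  rw [T.map_smul_univ (fun i => h (r i)), Complex.real_smul, mul_comm]
  congr 1
  rw [Complex.ofReal_prod, ← Finset.prod_fiberwise Finset.univ r]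
  refine Finset.prod_congr rfl fun j _ => ?_
  rw [← Finset.prod_const]
  refine Finset.prod_congr rfl fun i hi => ?_
  rw [(Finset.mem_filter.1 hi).2]

/-- Vanishing moments up to order `N` annihilate every homogeneous polynomial of degree
`k ≤ N` centered at `x₀`. -/
lemma integral_multilinear_mul_eq_zero {n N k : ℕ} (hk : k ≤ N) {a : Euc n → ℂ}
    (ha : Integrable a volume) {K : Set (Euc n)} (hK : IsCompact K)
    (hsupp : Function.support a ⊆ K) (x₀ : Euc n)
    (hmom : ∀ β : Fin n → ℕ, (∑ i, β i) ≤ N →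
      ∫ x : Euc n, (∏ i, (((x i : ℝ) : ℂ) - ((x₀ i : ℝ) : ℂ)) ^ β i) * a x = 0)
    (T : ContinuousMultilinearMap ℝ (fun _ : Fin k => Euc n) ℂ) :
    ∫ x : Euc n, T (fun _ => x - x₀) * a x = 0 := by
  simp_rw [multilinear_diag_eq_sum T, Finset.sum_mul, mul_assoc]
  rw [integral_finsetSum]
  · refine Finset.sum_eq_zero fun r _ => ?_
    rw [integral_const_mul]
    have := hmom (fun j => (Finset.univ.filter fun i => r i = j).card) (by
      rw [← Finset.card_eq_sum_card_fiberwise (fun _ _ => Finset.mem_coe.2 (Finset.mem_univ _))]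
      simpa using hk)
    simp only [PiLp.sub_apply, Complex.ofReal_sub]
    rw [this, mul_zero]
  · intro r _
    refine (integrable_mul_of_support ha hK hsupp ?_).const_mul _
    fun_prop

/-! ### The estimate -/

lemma norm_sub_le_of_mem_cube {n : ℕ} {x x₀ : Euc n} {s : ℝ} (hs : 0 ≤ s)
    (hx : x ∈ cube n (fun i => x₀ i) s) : ‖x - x₀‖ ≤ (n + 1) * s := by
  have h1 : ‖x - x₀‖ ≤ ∑ i, ‖(x - x₀) i‖ := by
    have hh : x - x₀ = ∑ j, (x - x₀) j • EuclideanSpace.single j (1 : ℝ) := by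
      ext i
      simp [Finset.sum_apply, Pi.single_apply]
    conv_lhs => rw [hh]
    refine (norm_sum_le _ _).trans (Finset.sum_le_sum fun i _ => ?_)
    simp [norm_smul]
  have h2 : ∑ i, ‖(x - x₀) i‖ ≤ ∑ _i : Fin n, s :=
    Finset.sum_le_sum fun i _ => (hx i).trans (by linarith)
  simp only [Finset.sum_const, Finset.card_univ, Fintype.card_fin, nsmul_eq_mul] at h2
  linarith

/-- Classical moment conditions imply the general moment condition: if `a` is integrable,
supported in `d·Q_{ν,m}`, and `∫ (x−2^{-ν}m)^β a(x) dx = 0` for all `|β| ≤ ⌊L⌋`, then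
`|∫ ψ a| ≤ c·2^{-νL}·‖a‖_{L₁}·‖ψ|𝒞^L‖` for all `ψ ∈ 𝒞^L(ℝⁿ)`, where `c` depends only on
`n`, `L` and `d`. -/
theorem statement_14 (n : ℕ) (L d : ℝ) (hL : 0 < L) (hd : 1 < d) :
    ∃ c > (0:ℝ), ∀ (ν : ℕ) (m : Fin n → ℤ) (a : Euc n → ℂ),
      Integrable a volume →
      Function.support a ⊆ cubeQ n ν m d →
      (∀ β : Fin n → ℕ, (∑ i, β i) ≤ ⌈L⌉₊ - 1 →
        ∫ x : Euc n,
          (∏ i, (((x i : ℝ) : ℂ) - (((2:ℝ) ^ (-(ν:ℤ)) * (m i : ℝ) : ℝ) : ℂ)) ^ β i) * a x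
            = 0) →
      ∀ ψ : Euc n → ℂ, MemHolderSpace n L ψ →
        ‖∫ x, ψ x * a x‖ ≤
          c * (2:ℝ) ^ (-(ν:ℝ) * L) * (∫ x, ‖a x‖) * (holderNorm n L ψ).toReal := by
  refine ⟨((n + 1) * d) ^ L, by positivity, ?_⟩
  intro ν m a ha hsupp hmom ψ hψ
  obtain ⟨N, hN⟩ : ∃ N, ⌈L⌉₊ = N + 1 :=
    Nat.exists_eq_succ_of_ne_zero (Nat.ceil_pos.2 hL).ne'
  have hNL : (N : ℝ) < L := Nat.lt_ceil.1 (by omega)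
  have hψd : ContDiff ℝ N ψ := by
    have := hψ.1.2 hL.ne'
    rw [hN] at this
    exact_mod_cast this
  set H := (holderNorm n L ψ).toReal with hH
  have hH0 : 0 ≤ H := ENNReal.toReal_nonneg
  set x₀ : Euc n := WithLp.toLp 2 fun i => (2:ℝ) ^ (-(ν:ℤ)) * (m i : ℝ) with hx₀
  set R : ℝ := (n + 1) * (d * (2:ℝ) ^ (-(ν:ℤ))) with hR
  have hball : Function.support a ⊆ Metric.closedBall x₀ R := by
    intro x hx
    rw [mem_closedBall_iff_norm]
    exact norm_sub_le_of_mem_cube (by positivity) (hsupp hx)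
  have hK : IsCompact (Metric.closedBall x₀ R) := isCompact_closedBall _ _
  let P : Euc n → ℂ := fun x => ∑ k ∈ Finset.range (N + 1),
    ((k.factorial : ℝ)⁻¹) • iteratedFDeriv ℝ k ψ x₀ (fun _ => x - x₀)
  have hterm : ∀ k, Continuous fun x : Euc n => iteratedFDeriv ℝ k ψ x₀ (fun _ => x - x₀) := by
    intro k
    exact (iteratedFDeriv ℝ k ψ x₀).cont.comp (by fun_prop)
  have hPc : Continuous P :=
    continuous_finsetSum _ fun k _ => (hterm k).fun_const_smul _
  have hPa : ∫ x, P x * a x = 0 := by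
    simp only [P, Finset.sum_mul, smul_mul_assoc]
    rw [integral_finsetSum]
    · refine Finset.sum_eq_zero fun k hk => ?_
      rw [integral_smul, integral_multilinear_mul_eq_zero (N := N)
        (by have := Finset.mem_range.1 hk; omega) ha hK hball x₀ ?_, smul_zero]
      intro β hβ
      exact hmom β (by omega)
    · intro k _
      exact (integrable_mul_of_support ha hK hball (hterm k)).smul ((k.factorial : ℝ)⁻¹)
  have hrem : ∀ x ∈ Metric.closedBall x₀ R, ‖ψ x - P x‖ ≤ H * R ^ L := by
    intro x hx
    rw [mem_closedBall_iff_norm] at hx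
    have h := norm_sub_iteratedFDeriv_taylor_le N hψd x₀ (x - x₀)
      (B := H * ‖x - x₀‖ ^ (L - N)) (fun t ht => by
        refine (holder_iteratedFDeriv_le hL hN hψ.2 _ _).trans ?_
        rw [add_sub_cancel_left, norm_smul, Real.norm_of_nonneg ht.1]
        exact mul_le_mul_of_nonneg_left (Real.rpow_le_rpow
          (mul_nonneg ht.1 (norm_nonneg _)) (mul_le_of_le_one_left (norm_nonneg _) ht.2)
          (by linarith)) hH0)
    rw [add_sub_cancel] at h
    refine h.trans ?_
    rw [mul_assoc, ← Real.rpow_natCast, ← Real.rpow_add_of_nonneg (norm_nonneg _)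
      (by linarith) (by positivity), sub_add_cancel]
    gcongr
  have hRL : R ^ L = ((n + 1) * d) ^ L * (2:ℝ) ^ (-(ν:ℝ) * L) := by
    rw [hR, ← mul_assoc, Real.mul_rpow (by positivity) (by positivity), ← Real.rpow_intCast,
      ← Real.rpow_mul (by norm_num)]
    push_cast
    rfl
  have hsub : ∫ x, ψ x * a x = ∫ x, (ψ x - P x) * a x := by
    simp only [sub_mul]
    rw [integral_sub (integrable_mul_of_support ha hK hball hψd.continuous)
      (integrable_mul_of_support ha hK hball hPc), hPa, sub_zero]
  calc ‖∫ x, ψ x * a x‖ = ‖∫ x, (ψ x - P x) * a x‖ := by rw [hsub]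
    _ ≤ ∫ x, (H * R ^ L) * ‖a x‖ := by
        refine norm_integral_le_of_norm_le (ha.norm.const_mul _) (ae_of_all _ fun x => ?_)
        by_cases hx : a x = 0
        · simp [hx]
        · rw [norm_mul]
          exact mul_le_mul_of_nonneg_right (hrem x (hball hx)) (norm_nonneg _)
    _ = _ := by
        rw [integral_const_mul, hRL]
        ring
end
end

section
/- Let n∈ℕ, s∈ℝ, 0<p≤∞, K>0 and d>1. Let k:ℝⁿ→ℂ be smooth with compact support and ∫_{ℝⁿ} x^β k(x)dx = 0 for all multi-indices β with |β|≤⌊K⌋, and set k_j(x)=2^{jn}k(2^{j}x). Then there exist constants c>0 and C'>0 such that for every ν∈ℕ₀, every m∈ℤⁿ, every j∈ℕ₀ with j≥ν, and every function a:ℝⁿ→ℂ with supp a ⊂ d·Q_{ν,m} and ‖a(2^{−ν}·)|𝒞^K(ℝⁿ)‖ ≤ C·2^{−ν(s−n/p)} (for some C>0), the convolution satisfies |(k_j ∗ a)(x)| ≤ C'·C·2^{−js}·2^{−(j−ν)(K−s)}·2^{νn/p}·1_{c·Q_{ν,m}}(x) for all x∈ℝⁿ, where 1_{c·Q_{ν,m}}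 is the characteristic function of c·Q_{ν,m}. -/
/-!
After the substitution `z = 2^j (x - y)` the convolution becomes `∫ k(z) f(X - ε z) dz`, with
`f = a(2^{-ν}·)`, `X = 2^ν x` and `ε = 2^{ν-j}`. The vanishing moments of `k` annihilate the
Taylor polynomial of `f` at `X` of degree `N = ⌈K⌉ - 1` (`moment_multilinear`). What remains is
the Taylor remainder, bounded by `A (ε|z|)^K` with `A` the bound on the Hölder norm of `f`
(`taylor_holder`), so the integral is at most `A ε^K ∫ |k(z)| |z|^K dz` (`core_estimate`).
Since `A = C 2^{-ν(s - n/p)}`, this is the asserted bound. The indicator comes from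
the supports: since `j ≥ ν`, the support of `k_j` has radius `O(2^{-ν})` (`conv_eq_zero`).
-/

open MeasureTheory ENNReal
open scoped Classical ENNReal NNReal

noncomputable section

/-- Taylor expansion on `[0,1]` with a crude remainder: the oscillation of the top derivative
bounds the error. Proved by induction on `N`, integrating the bound for the derivative. -/
lemma taylor_unit_bound (N : ℕ) : ∀ (g : ℝ → ℂ), ContDiff ℝ N g → ∀ B : ℝ,
    (∀ t ∈ Set.Icc (0:ℝ) 1, ‖iteratedDeriv N g t - iteratedDeriv N g 0‖ ≤ B) →
    ∀ t ∈ Set.Icc (0:ℝ) 1,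
      ‖g t - ∑ i ∈ Finset.range (N + 1),
        (t ^ i / (Nat.factorial i : ℝ)) • iteratedDeriv i g 0‖ ≤ B := by
  induction N with
  | zero =>
    intro g hg B hB t ht
    simpa using hB t ht
  | succ N ih =>
    intro g hg B hB t ht
    have hg' : ContDiff ℝ N (deriv g) := by
      have h := hg
      rw [show ((N + 1 : ℕ) : WithTop ℕ∞) = (N : WithTop ℕ∞) + 1 by push_cast; rfl,
        contDiff_succ_iff_deriv] at h
      exact h.2.2
    have hdiff : Differentiable ℝ g := hg.differentiable (by simp)
    have key := ih (deriv g) hg' B (by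
      intro u hu
      simpa only [← iteratedDeriv_succ'] using hB u hu)
    have hB0 : 0 ≤ B := le_trans (norm_nonneg _) (hB 0 (by simp))
    set φ : ℝ → ℂ := fun u => g u - ∑ i ∈ Finset.range (N + 2),
        (u ^ i / (Nat.factorial i : ℝ)) • iteratedDeriv i g 0 with hφ
    have hder : ∀ u, HasDerivAt φ (deriv g u - ∑ i ∈ Finset.range (N + 1),
        (u ^ i / (Nat.factorial i : ℝ)) • iteratedDeriv i (deriv g) 0) u := by
      intro u
      refine (hdiff u).hasDerivAt.sub ?_
      have h1 : HasDerivAt (fun u : ℝ => ∑ i ∈ Finset.range (N + 2),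
          (u ^ i / (Nat.factorial i : ℝ)) • iteratedDeriv i g 0)
          (∑ i ∈ Finset.range (N + 2),
            (((i : ℝ) * u ^ (i - 1)) / (Nat.factorial i : ℝ)) • iteratedDeriv i g 0) u := by
        apply HasDerivAt.fun_sum
        intro i _
        exact ((hasDerivAt_pow i u).div_const _).smul_const _
      refine h1.congr_deriv ?_
      symm
      rw [Finset.sum_range_succ' _ (N + 1)]
      simp only [Nat.cast_zero, zero_mul, zero_div, zero_smul, add_zero]
      refine Finset.sum_congr rfl fun i _ => ?_
      rw [← iteratedDeriv_succ']
      congr 1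
      rw [Nat.factorial_succ]
      push_cast
      have : (Nat.factorial i : ℝ) ≠ 0 := by positivity
      have : (i : ℝ) + 1 ≠ 0 := by positivity
      field_simp
    have hφ0 : φ 0 = 0 := by
      simp only [hφ]
      rw [Finset.sum_range_succ' _ (N + 1)]
      simp
    have hmv := norm_image_sub_le_of_norm_deriv_le_segment' (f := φ) (a := 0) (b := 1) (C := B)
      (fun u _ => (hder u).hasDerivWithinAt)
      (fun u hu => key u ⟨hu.1, hu.2.le⟩) t ht
    rw [hφ0, sub_zero, sub_zero] at hmv
    exact hmv.trans (by nlinarith [ht.1, ht.2])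

lemma iteratedDeriv_line {n N : ℕ} (f : Euc n → ℂ) (hf : ContDiff ℝ N f) (X h : Euc n)
    (i : ℕ) (hi : i ≤ N) (t : ℝ) :
    iteratedDeriv i (fun u : ℝ => f (X + u • h)) t =
      iteratedFDeriv ℝ i f (X + t • h) (fun _ => h) := by
  have hshift : ContDiff ℝ N (fun y => f (X + y)) := hf.comp (contDiff_const.add contDiff_id)
  have hcomp := ContinuousLinearMap.iteratedFDeriv_comp_right
    (ContinuousLinearMap.toSpanSingleton ℝ h) hshift t (i := i) (by exact_mod_cast hi)
  rw [iteratedDeriv_eq_iteratedFDeriv]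
  have : (fun u : ℝ => f (X + u • h)) =
      (fun y => f (X + y)) ∘ (ContinuousLinearMap.toSpanSingleton ℝ h) := by
    ext u; simp
  rw [this, hcomp, iteratedFDeriv_comp_add_left]
  simp

/-- Taylor's formula in `ℝⁿ` with a Hölder remainder. -/
lemma taylor_holder {n N : ℕ} (f : Euc n → ℂ) (hf : ContDiff ℝ N f) {A θ : ℝ} (hA : 0 ≤ A)
    (hθ : 0 < θ)
    (hH : ∀ x y, ‖iteratedFDeriv ℝ N f x - iteratedFDeriv ℝ N f y‖ ≤ A * ‖x - y‖ ^ θ)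
    (X h : Euc n) :
    ‖f (X + h) - ∑ i ∈ Finset.range (N + 1),
      (1 / (Nat.factorial i : ℝ)) • iteratedFDeriv ℝ i f X (fun _ => h)‖
        ≤ A * ‖h‖ ^ ((N : ℝ) + θ) := by
  have hg : ContDiff ℝ N (fun u : ℝ => f (X + u • h)) :=
    hf.comp (contDiff_const.add (contDiff_id.smul contDiff_const))
  have := taylor_unit_bound N _ hg (A * ‖h‖ ^ ((N : ℝ) + θ)) (by
    intro t ht
    rw [iteratedDeriv_line f hf X h N le_rfl, iteratedDeriv_line f hf X h N le_rfl,
      ← sub_apply]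
    refine (ContinuousMultilinearMap.le_opNorm _ _).trans ?_
    have h1 : ‖X + t • h - (X + (0:ℝ) • h)‖ ≤ ‖h‖ := by
      simp only [zero_smul, add_zero, add_sub_cancel_left, norm_smul, Real.norm_eq_abs,
        abs_of_nonneg ht.1]
      exact mul_le_of_le_one_left (norm_nonneg _) ht.2
    have h2 := (hH (X + t • h) (X + (0:ℝ) • h)).trans
      (mul_le_mul_of_nonneg_left (Real.rpow_le_rpow (norm_nonneg _) h1 hθ.le) hA)
    calc _ ≤ (A * ‖h‖ ^ θ) * ∏ _i : Fin N, ‖h‖ := by gcongr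
      _ = _ := by
        rw [Real.rpow_add_of_nonneg (norm_nonneg _) (by positivity) hθ.le, Real.rpow_natCast]
        simp; ring) 1 (by simp)
  simp only [one_smul, one_pow] at this
  refine le_trans (le_of_eq ?_) this
  congr 2
  refine Finset.sum_congr rfl fun i hi => ?_
  rw [iteratedDeriv_line f hf X h i (by simpa [Nat.lt_succ_iff] using hi)]
  simp

/-- Vanishing monomial moments annihilate every homogeneous polynomial `z ↦ M(z,…,z)`: expand
`M` in the standard basis. -/
lemma moment_multilinear {n N : ℕ} (k : Euc n → ℂ) (hk : Continuous k)
    (hks : HasCompactSupport k)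
    (hmom : ∀ β : Fin n → ℕ, (∑ i, β i) ≤ N →
      ∫ x : Euc n, (∏ i, ((x i : ℝ) : ℂ) ^ β i) * k x = 0)
    (i : ℕ) (hi : i ≤ N) (M : ContinuousMultilinearMap ℝ (fun _ : Fin i => Euc n) ℂ) :
    ∫ z : Euc n, k z * M (fun _ => z) = 0 := by
  let b := EuclideanSpace.basisFun (Fin n) ℝ
  have hexp : ∀ z : Euc n, k z * M (fun _ => z) = ∑ r : Fin i → Fin n,
      M (fun l => b (r l)) *
        ((∏ q, ((z q : ℝ) : ℂ) ^ (Finset.univ.filter (fun l => r l = q)).card) * k z) := by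
    intro z
    have hz : (fun _ : Fin i => z) = fun _ : Fin i => ∑ q, z q • b q := by
      funext l
      have := b.sum_repr z
      simpa [b] using this.symm
    rw [hz]
    have := M.toMultilinearMap.map_sum (fun (_ : Fin i) (q : Fin n) => z q • b q)
    simp only [ContinuousMultilinearMap.coe_coe] at this
    rw [this, Finset.mul_sum]
    refine Finset.sum_congr rfl fun r _ => ?_
    rw [ContinuousMultilinearMap.map_smul_univ]
    have hp : ∏ l, z (r l) = ∏ q, (z q) ^ (Finset.univ.filter (fun l => r l = q)).card := by
      rw [Finset.prod_comp (fun q => z q) r]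
      refine Finset.prod_subset (Finset.subset_univ _) fun q _ hq => ?_
      have : Finset.univ.filter (fun l => r l = q) = ∅ := by
        ext l
        simp only [Finset.mem_filter, Finset.mem_univ, true_and, Finset.notMem_empty, iff_false]
        rintro rfl
        exact hq (Finset.mem_image_of_mem _ (Finset.mem_univ _))
      simp [this]
    rw [hp, Complex.real_smul]
    push_cast
    ring
  simp_rw [hexp]
  rw [integral_finsetSum]
  · refine Finset.sum_eq_zero fun r _ => ?_
    rw [integral_const_mul, hmom _ ?_, mul_zero]
    refine le_trans (le_of_eq ?_) hi
    rw [← Finset.card_eq_sum_card_fiberwise (s := Finset.univ) (t := Finset.univ) (f := r)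
      (fun _ _ => by simp)]
    simp
  · intro r _
    refine Integrable.const_mul ?_ _
    refine Continuous.integrable_of_hasCompactSupport (by fun_prop) ?_
    exact hks.mul_left

/-- Convolution estimate in normalized coordinates: only the Taylor remainder of `f` at `X`
contributes to the integral. -/
lemma core_estimate {n N : ℕ} (k : Euc n → ℂ) (hk : Continuous k)
    (hks : HasCompactSupport k)
    (hmom : ∀ β : Fin n → ℕ, (∑ i, β i) ≤ N →
      ∫ x : Euc n, (∏ i, ((x i : ℝ) : ℂ) ^ β i) * k x = 0)
    (f : Euc n → ℂ) (hf : ContDiff ℝ N f) {A θ : ℝ} (hA : 0 ≤ A) (hθ : 0 < θ)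
    (hH : ∀ x y, ‖iteratedFDeriv ℝ N f x - iteratedFDeriv ℝ N f y‖ ≤ A * ‖x - y‖ ^ θ)
    (X : Euc n) (e : ℝ) :
    ‖∫ z, k z * f (X + e • z)‖ ≤
      A * |e| ^ ((N : ℝ) + θ) * ∫ z, ‖k z‖ * ‖z‖ ^ ((N : ℝ) + θ) := by
  have hfc : Continuous f := hf.continuous
  have hNθ : 0 ≤ (N : ℝ) + θ := by positivity
  have hI1 : Integrable (fun z => k z * f (X + e • z)) :=
    Continuous.integrable_of_hasCompactSupport (by fun_prop) hks.mul_right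
  have hterm : ∀ i, Integrable (fun z => k z *
      ((1 / (Nat.factorial i : ℝ)) • iteratedFDeriv ℝ i f X (fun _ => e • z))) := by
    intro i
    refine Continuous.integrable_of_hasCompactSupport ?_ hks.mul_right
    have : Continuous fun z : Euc n => iteratedFDeriv ℝ i f X (fun _ => e • z) :=
      (iteratedFDeriv ℝ i f X).cont.comp (by fun_prop)
    fun_prop
  have hP0 : ∫ z, ∑ i ∈ Finset.range (N + 1), k z *
      ((1 / (Nat.factorial i : ℝ)) • iteratedFDeriv ℝ i f X (fun _ => e • z)) = 0 := by
    rw [integral_finsetSum _ (fun i _ => hterm i)]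
    refine Finset.sum_eq_zero fun i hi => ?_
    have := moment_multilinear k hk hks hmom i (by simpa [Nat.lt_succ_iff] using hi)
      (iteratedFDeriv ℝ i f X)
    have h2 : ∀ z : Euc n, k z *
      ((1 / (Nat.factorial i : ℝ)) • iteratedFDeriv ℝ i f X (fun _ => e • z)) =
        (((1 / (Nat.factorial i : ℝ)) * e ^ i : ℝ) : ℂ) *
          (k z * iteratedFDeriv ℝ i f X (fun _ => z)) := by
      intro z
      have h3 := (iteratedFDeriv ℝ i f X).map_smul_univ (fun _ => e) (fun _ => z)
      rw [h3]
      simp only [Finset.prod_const, Finset.card_univ, Fintype.card_fin, Complex.real_smul]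
      push_cast
      ring
    simp_rw [h2]
    rw [integral_const_mul, this, mul_zero]
  have hsub : ∫ z, k z * f (X + e • z) = ∫ z, k z * (f (X + e • z) -
      ∑ i ∈ Finset.range (N + 1),
        (1 / (Nat.factorial i : ℝ)) • iteratedFDeriv ℝ i f X (fun _ => e • z)) := by
    simp_rw [mul_sub, Finset.mul_sum]
    rw [integral_sub hI1 (integrable_finsetSum _ fun i _ => hterm i), hP0, sub_zero]
  rw [hsub, ← integral_const_mul]
  refine norm_integral_le_of_norm_le ?_ (Filter.Eventually.of_forall fun z => ?_)
  · refine Integrable.const_mul ?_ _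
    refine Continuous.integrable_of_hasCompactSupport ?_ hks.norm.mul_right
    exact hk.norm.mul (continuous_norm.rpow_const fun _ => Or.inr hNθ)
  · rw [norm_mul]
    have h := taylor_holder f hf hA hθ hH X (e • z)
    rw [norm_smul, Real.norm_eq_abs, Real.mul_rpow (abs_nonneg _) (norm_nonneg _)] at h
    calc _ ≤ ‖k z‖ * (A * (|e| ^ ((N : ℝ) + θ) * ‖z‖ ^ ((N : ℝ) + θ))) := by gcongr
      _ = _ := by ring

/-- The Hölder seminorm estimate contained in a bound on `holderNorm`. -/
lemma holder_of_holderNorm {n : ℕ} {K A : ℝ} (hK : 0 < K) (hA : 0 ≤ A) (f : Euc n → ℂ)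
    (h : holderNorm n K f ≤ ENNReal.ofReal A) (x y : Euc n) :
    ‖iteratedFDeriv ℝ (⌈K⌉₊ - 1) f x - iteratedFDeriv ℝ (⌈K⌉₊ - 1) f y‖ ≤
      A * ‖x - y‖ ^ (K - ((⌈K⌉₊ : ℝ) - 1)) := by
  by_cases hxy : x = y
  · subst hxy
    simp only [sub_self, norm_zero]
    positivity
  rw [holderNorm, if_neg hK.ne'] at h
  have h1 := le_trans (le_trans (le_iSup (fun q : Euc n × Euc n =>
      if q.1 = q.2 then 0
        else (‖iteratedFDeriv ℝ (⌈K⌉₊ - 1) f q.1 - iteratedFDeriv ℝ (⌈K⌉₊ - 1) f q.2‖₊ : ℝ≥0∞) /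
          ENNReal.ofReal (‖q.1 - q.2‖ ^ (K - ((⌈K⌉₊ : ℝ) - 1)))) (x, y)) le_add_self) h
  simp only [if_neg hxy] at h1
  have hpos : 0 < ‖x - y‖ ^ (K - ((⌈K⌉₊ : ℝ) - 1)) :=
    Real.rpow_pos_of_pos (norm_pos_iff.2 (sub_ne_zero.2 hxy)) _
  rw [ENNReal.div_le_iff (by simpa using hpos) (by simp), ← ENNReal.ofReal_mul hA] at h1
  have h2 := ENNReal.toReal_mono ENNReal.ofReal_ne_top h1
  rwa [ENNReal.toReal_ofReal (by positivity), ENNReal.coe_toReal, coe_nnnorm] at h2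

/-- The substitution `z = 2^j (x - y)`. -/
lemma conv_change_variables {n : ℕ} (k a : Euc n → ℂ) (j : ℕ) (x : Euc n) :
    ∫ y : Euc n, ((2:ℝ) ^ (j * n) • k ((2:ℝ) ^ j • (x - y))) * a y =
      ∫ z, k z * a (x - ((2:ℝ) ^ j)⁻¹ • z) := by
  have h1 := integral_sub_left_eq_self
    (fun u : Euc n => ((2:ℝ) ^ (j * n) • k ((2:ℝ) ^ j • u)) * a (x - u)) volume x
  simp only [sub_sub_self] at h1
  rw [h1]
  have h2 := Measure.integral_comp_smul (volume : Measure (Euc n))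
    (fun z => k z * a (x - ((2:ℝ) ^ j)⁻¹ • z)) ((2:ℝ) ^ j)
  have hne : ((2:ℝ) ^ j) ≠ 0 := by positivity
  simp only [smul_smul, inv_mul_cancel₀ hne, one_smul, finrank_euclideanSpace,
    Fintype.card_fin] at h2
  simp only [smul_mul_assoc]
  rw [integral_smul, h2, smul_smul, abs_of_pos (by positivity), pow_mul,
    mul_inv_cancel₀ (by positivity), one_smul]

/-- The convolution vanishes away from the enlarged cube. -/
lemma conv_eq_zero {n : ℕ} (k a : Euc n → ℂ) {R d : ℝ}
    (hR : ∀ z, k z ≠ 0 → ‖z‖ ≤ R) {ν j : ℕ} (hνj : ν ≤ j) (m : Fin n → ℤ)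
    (ha : Function.support a ⊆ cubeQ n ν m d) (x : Euc n)
    (hx : x ∉ cubeQ n ν m (d + 2 * R)) :
    ∫ y : Euc n, ((2:ℝ) ^ (j * n) • k ((2:ℝ) ^ j • (x - y))) * a y = 0 := by
  refine integral_eq_zero_of_ae (Filter.Eventually.of_forall fun y => ?_)
  by_contra hne
  simp only [Pi.zero_apply, mul_eq_zero, smul_eq_zero, not_or] at hne
  refine hx fun i => ?_
  have hy := ha (show y ∈ Function.support a from hne.2) i
  have hz := hR _ hne.1.2
  rw [norm_smul, Real.norm_of_nonneg (by positivity)] at hz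
  have hi : |x i - y i| ≤ ‖x - y‖ := by
    simpa using PiLp.norm_apply_le (x - y) i
  have hpw : ‖x - y‖ ≤ R * (2:ℝ) ^ (-(ν:ℤ)) := by
    have h2 : (2:ℝ) ^ ν ≤ 2 ^ j := pow_le_pow_right₀ (by norm_num) hνj
    rw [zpow_neg, zpow_natCast, ← div_eq_mul_inv, le_div_iff₀ (by positivity)]
    calc ‖x - y‖ * 2 ^ ν ≤ ‖x - y‖ * 2 ^ j := by gcongr
      _ ≤ R := by linarith
  have htri := abs_sub_le (x i) (y i) ((2:ℝ) ^ (-(ν:ℤ)) * (m i : ℝ))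
  simp only at hy ⊢
  linarith

/-- Convolution estimate for local means against atoms, `j ≥ ν`: if `k` is smooth with compact
support and vanishing moments up to order `⌊K⌋`, `k_j = 2^{jn} k(2^j ·)`, and `a` is
supported in `d·Q_{ν,m}` with `‖a(2^{-ν}·)|𝒞^K‖ ≤ C·2^{-ν(s-n/p)}`, then
`|(k_j ∗ a)(x)| ≤ C'·C·2^{-js}·2^{-(j-ν)(K-s)}·2^{νn/p}·1_{c·Q_{ν,m}}(x)`. -/
theorem statement_15 (n : ℕ) (s : ℝ) (p : ℝ≥0∞) (hp : 0 < p) (K d : ℝ)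
    (hK : 0 < K) (hd : 1 < d)
    (k : Euc n → ℂ) (hk : ContDiff ℝ (⊤ : ℕ∞) k) (hks : HasCompactSupport k)
    (hmom : ∀ β : Fin n → ℕ, (∑ i, β i) ≤ ⌈K⌉₊ - 1 →
      ∫ x : Euc n, (∏ i, ((x i : ℝ) : ℂ) ^ β i) * k x = 0) :
    ∃ c > (0:ℝ), ∃ C' > (0:ℝ), ∀ (ν j : ℕ), ν ≤ j → ∀ (m : Fin n → ℤ) (C : ℝ), 0 < C →
      ∀ a : Euc n → ℂ,
        Function.support a ⊆ cubeQ n ν m d →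
        holderSmooth n K (fun x => a ((2:ℝ) ^ (-(ν:ℤ)) • x)) →
        holderNorm n K (fun x => a ((2:ℝ) ^ (-(ν:ℤ)) • x)) ≤
          ENNReal.ofReal (C * (2:ℝ) ^ (-(ν:ℝ) * (s - n * (p⁻¹).toReal))) →
        ∀ x : Euc n,
          ‖∫ y : Euc n, ((2:ℝ) ^ (j * n) • k ((2:ℝ) ^ j • (x - y))) * a y‖ ≤
            C' * C * (2:ℝ) ^ (-(j:ℝ) * s) * (2:ℝ) ^ (-((j:ℝ) - (ν:ℝ)) * (K - s)) *
              (2:ℝ) ^ ((ν:ℝ) * n * (p⁻¹).toReal) *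
              (cubeQ n ν m c).indicator (fun _ => (1:ℝ)) x := by
  obtain ⟨R, hR⟩ := hks.isCompact.isBounded.exists_norm_le
  have hRk : ∀ z, k z ≠ 0 → ‖z‖ ≤ max R 0 := fun z hz =>
    (hR z (subset_tsupport _ hz)).trans (le_max_left _ _)
  have hR0 : 0 ≤ max R 0 := le_max_right _ _
  set I : ℝ := ∫ z, ‖k z‖ * ‖z‖ ^ K with hI
  have hI0 : 0 ≤ I := integral_nonneg fun z => by positivity
  refine ⟨d + 2 * max R 0, by linarith, I + 1, by linarith, ?_⟩
  intro ν j hνj m C hC a hsupp hsm hnorm x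
  by_cases hx : x ∈ cubeQ n ν m (d + 2 * max R 0)
  swap
  · rw [conv_eq_zero k a hRk hνj m hsupp x hx]
    simp [hx]
  rw [Set.indicator_of_mem hx, mul_one, conv_change_variables]
  set f : Euc n → ℂ := fun x => a ((2:ℝ) ^ (-(ν:ℤ)) • x) with hf
  set A : ℝ := C * (2:ℝ) ^ (-(ν:ℝ) * (s - n * (p⁻¹).toReal)) with hA
  have hA0 : 0 ≤ A := by positivity
  have hceil : 1 ≤ ⌈K⌉₊ := Nat.one_le_iff_ne_zero.2 (Nat.ceil_pos.2 hK).ne'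
  have hcast : ((⌈K⌉₊ - 1 : ℕ) : ℝ) = (⌈K⌉₊ : ℝ) - 1 := by push_cast [hceil]; ring
  have hθ : 0 < K - ((⌈K⌉₊ : ℝ) - 1) := by linarith [Nat.ceil_lt_add_one hK.le]
  have hcore := core_estimate k hk.continuous hks hmom f (by exact_mod_cast hsm.2 hK.ne') hA0 hθ
    (holder_of_holderNorm hK hA0 f hnorm) ((2:ℝ) ^ ν • x) (-((2:ℝ) ^ ν * ((2:ℝ) ^ j)⁻¹))
  have harg : ∀ z, f ((2:ℝ) ^ ν • x + (-((2:ℝ) ^ ν * ((2:ℝ) ^ j)⁻¹)) • z) =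
      a (x - ((2:ℝ) ^ j)⁻¹ • z) := by
    intro z
    have hne : ((2:ℝ) ^ ν) ≠ 0 := by positivity
    simp only [hf, zpow_neg, zpow_natCast, smul_add, smul_neg, smul_smul,
      inv_mul_cancel_left₀ hne, inv_mul_cancel₀ hne, one_smul, neg_smul, sub_eq_add_neg]
  simp only [harg, hcast, add_sub_cancel] at hcore
  rw [abs_neg, abs_of_pos (by positivity), ← hI] at hcore
  refine hcore.trans ?_
  have he : (2:ℝ) ^ ν * ((2:ℝ) ^ j)⁻¹ = (2:ℝ) ^ ((ν:ℝ) - j) := by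
    rw [Real.rpow_sub (by norm_num), Real.rpow_natCast, Real.rpow_natCast, div_eq_mul_inv]
  rw [he, ← Real.rpow_mul (by norm_num)]
  -- Both sides carry the same power of two, namely `2^{-(j-ν)K - ν(s - n/p)}`.
  have hpow : (2:ℝ) ^ (-(ν:ℝ) * (s - n * (p⁻¹).toReal)) * (2:ℝ) ^ (((ν:ℝ) - j) * K) =
      (2:ℝ) ^ (-(j:ℝ) * s) * (2:ℝ) ^ (-((j:ℝ) - (ν:ℝ)) * (K - s)) *
              (2:ℝ) ^ ((ν:ℝ) * n * (p⁻¹).toReal) := by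
    simp only [← Real.rpow_add (two_pos : (0:ℝ) < 2)]
    congr 1
    ring
  calc _ = I * C * ((2:ℝ) ^ (-(ν:ℝ) * (s - n * (p⁻¹).toReal)) *
          (2:ℝ) ^ (((ν:ℝ) - j) * K)) := by rw [hA]; ring
    _ ≤ (I + 1) * C * ((2:ℝ) ^ (-(ν:ℝ) * (s - n * (p⁻¹).toReal)) *
          (2:ℝ) ^ (((ν:ℝ) - j) * K)) := by gcongr; linarith
    _ = _ := by rw [hpow]; ring
end
end

section
/- Let n∈ℕ, s∈ℝ, 0<p≤∞, L>0 and d>1; set κ=s+L+n(1−1/p). Let k∈𝒞^L(ℝⁿ) have compact support, and set k_j(x)=2^{jn}k(2^{j}x). Then there exist constants c>0 and C'>0 such that for every ν∈ℕ₀, every m∈ℤⁿ, every j∈ℕ₀ with j≤ν, and every integrable function a:ℝⁿ→ℂ with supp a ⊂ d·Q_{ν,m} satisfying |∫_{ℝⁿ} ψ(x)a(x)dx| ≤ C·2^{−νκ}·‖ψ|𝒞^L(ℝⁿ)‖ for all ψ∈𝒞^L(ℝⁿ) (for some C>0), the convolution satisfies |(k_j ∗ a)(x)| ≤ C'·C·2^{−js}·2^{−(ν−j)(L+s)}·2^{νn/p}·2^{−(ν−j)n}·1_{B}(x)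 for all x∈ℝⁿ, where B is the cube with center 2^{−ν}m and side length c·2^{−j} and 1_B its characteristic function. -/
/-!
For fixed `x`, the function `ψ(y) = 2^{jn} k(2^j (x - y))` is itself an admissible test function in
the moment condition on `a`, and the convolution is `∫ ψ a`. The chain rule shows that passing from
`k` to `ψ` multiplies the derivative of order `i` by `2^{jn} 2^{ji}` in norm, and the Hölder quotient
of order `L` by `2^{jn} 2^{jL}`. Since only orders `i < L` occur and `2^j ≥ 1`, this gives
`‖ψ | 𝒞^L‖ ≤ 2^{jn} 2^{jL} ‖k | 𝒞^L‖` (`holderNorm_dilate_le`), and the stated power of `2` is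
`2^{-νκ} 2^{jn} 2^{jL}` rewritten. The localisation to the cube `B` is the support of a
convolution (`mem_cube_of_ne_zero`): the support of `k_j` has size `≲ 2^{-j}` and that of `a` has
size `≲ 2^{-ν} ≤ 2^{-j}`.
-/

open MeasureTheory ENNReal
open scoped Classical ENNReal NNReal

noncomputable section

lemma iteratedFDeriv_dilate {n N i : ℕ} (hi : i ≤ N) {k : Euc n → ℂ} (hk : ContDiff ℝ N k)
    (A r : ℝ) (x y : Euc n) :
    iteratedFDeriv ℝ i (fun y => A • k (r • (x - y))) y =
      (A * (-r) ^ i) • iteratedFDeriv ℝ i k (r • (x - y)) := by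
  have hki : ContDiff ℝ i k := hk.of_le (by exact_mod_cast hi)
  have hg : ContDiff ℝ i (fun z : Euc n => k ((-r) • z)) := hki.comp (contDiff_const_smul _)
  have e : (fun y => A • k (r • (x - y))) =
      fun y => A • (fun y => (fun z : Euc n => k ((-r) • z)) (y - x)) y := by
    funext y
    simp only [neg_smul, ← smul_neg, neg_sub]
  have hg2 : ContDiff ℝ i (fun y => (fun z : Euc n => k ((-r) • z)) (y - x)) :=
    hg.comp (contDiff_id.sub contDiff_const)
  rw [e, iteratedFDeriv_const_smul_apply' hg2.contDiffAt, iteratedFDeriv_comp_sub (f := fun z : Euc n => k ((-r) • z)),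
    iteratedFDeriv_comp_const_smul (-r) hki, smul_smul]
  simp only [neg_smul, ← smul_neg, neg_sub]

/-- A dilation by `r ≥ 1` (composed with a reflection and a translation) costs at most a factor
`r ^ L` in the Hölder norm of order `L`. -/
lemma holderNorm_dilate_le {n : ℕ} {L : ℝ} (hL : 0 < L) {k : Euc n → ℂ}
    (hk : ContDiff ℝ ((⌈L⌉₊ - 1 : ℕ) : ℕ∞) k) {A r : ℝ} (hA : 0 ≤ A) (hr : 1 ≤ r) (x : Euc n) :
    holderNorm n L (fun y => A • k (r • (x - y))) ≤
      ENNReal.ofReal (A * r ^ L) * holderNorm n L k := by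
  have hr0 : 0 < r := by linarith
  have hc : 0 < ⌈L⌉₊ := Nat.ceil_pos.mpr hL
  have hk' : ContDiff ℝ (⌈L⌉₊ - 1 : ℕ) k := by exact_mod_cast hk
  have hcast : ((⌈L⌉₊ - 1 : ℕ) : ℝ) = (⌈L⌉₊ : ℝ) - 1 := by
    rw [Nat.cast_sub hc]; simp
  have hNL : (⌈L⌉₊ : ℝ) - 1 ≤ L := by linarith [Nat.ceil_lt_add_one hL.le]
  rw [holderNorm, holderNorm, if_neg hL.ne', if_neg hL.ne', mul_add]
  have hcoef : ∀ i : ℕ, ‖A * (-r) ^ i‖ = A * r ^ i := fun i => by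
    rw [norm_mul, norm_pow, norm_neg, Real.norm_of_nonneg hA, Real.norm_of_nonneg hr0.le]
  refine add_le_add ?_ ?_
  · rw [Finset.mul_sum]
    refine Finset.sum_le_sum fun i hi => iSup_le fun y => ?_
    have hi' : i ≤ ⌈L⌉₊ - 1 := by have := Finset.mem_range.mp hi; omega
    have hiL : (i : ℝ) ≤ L := le_trans (by rw [← hcast]; exact_mod_cast hi') hNL
    rw [iteratedFDeriv_dilate hi' hk']
    calc (‖(A * (-r) ^ i) • iteratedFDeriv ℝ i k (r • (x - y))‖₊ : ℝ≥0∞)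
        = ENNReal.ofReal (A * r ^ i) * (‖iteratedFDeriv ℝ i k (r • (x - y))‖₊ : ℝ≥0∞) := by
          rw [nnnorm_smul, ENNReal.coe_mul, ← hcoef i, ofReal_norm, enorm_eq_nnnorm]
      _ ≤ _ := by
          refine mul_le_mul' (ENNReal.ofReal_le_ofReal ?_)
            (le_iSup (fun z => (‖iteratedFDeriv ℝ i k z‖₊ : ℝ≥0∞)) (r • (x - y)))
          rw [← Real.rpow_natCast]
          gcongr
  · refine iSup_le fun q => ?_
    split_ifs with hq
    · exact zero_le
    have hd : r • (x - q.1) - r • (x - q.2) = -(r • (q.1 - q.2)) := by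
      rw [← smul_sub, ← smul_neg]; congr 1; abel
    have hne : r • (x - q.1) ≠ r • (x - q.2) := by
      rw [← sub_ne_zero, hd]
      simpa [hr0.ne', sub_eq_zero] using hq
    refine le_trans (le_of_eq ?_) (mul_le_mul_right (le_iSup (fun q : Euc n × Euc n =>
      if q.1 = q.2 then 0
        else (‖iteratedFDeriv ℝ (⌈L⌉₊ - 1) k q.1 - iteratedFDeriv ℝ (⌈L⌉₊ - 1) k q.2‖₊ : ℝ≥0∞) /
          ENNReal.ofReal (‖q.1 - q.2‖ ^ (L - ((⌈L⌉₊ : ℝ) - 1))))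
      (r • (x - q.1), r • (x - q.2))) _)
    simp only [if_neg hne]
    rw [iteratedFDeriv_dilate le_rfl hk', iteratedFDeriv_dilate le_rfl hk', ← smul_sub,
      nnnorm_smul, ENNReal.coe_mul, ← enorm_eq_nnnorm (A * (-r) ^ _), ← ofReal_norm,
      hcoef, hd, norm_neg, norm_smul, Real.norm_of_nonneg hr0.le,
      Real.mul_rpow hr0.le (norm_nonneg _),
      ENNReal.ofReal_mul (Real.rpow_nonneg hr0.le _)]
    -- `r ^ L = r ^ ⌊L⌋ * r ^ {L}`; the second factor cancels against the dilated denominator.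
    have hsplit : A * r ^ L = A * r ^ (⌈L⌉₊ - 1) * r ^ (L - ((⌈L⌉₊ : ℝ) - 1)) := by
      rw [mul_assoc, ← Real.rpow_natCast r (⌈L⌉₊ - 1), ← Real.rpow_add hr0, hcast]
      congr 2; ring
    rw [hsplit, ENNReal.ofReal_mul (by positivity : (0:ℝ) ≤ A * r ^ (⌈L⌉₊ - 1)), mul_assoc,
      ← mul_div_assoc (ENNReal.ofReal (r ^ (L - ((⌈L⌉₊ : ℝ) - 1)))),
      ENNReal.mul_div_mul_left _ _ (by simpa using Real.rpow_pos_of_pos hr0 _)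
        ENNReal.ofReal_ne_top, mul_div_assoc]

lemma mem_cube_of_ne_zero {n : ℕ} {k : Euc n → ℂ} {R d : ℝ} (hd : 0 ≤ d)
    (hR : ∀ z, k z ≠ 0 → ‖z‖ ≤ R) {j ν : ℕ} (hjν : j ≤ ν) {m : Fin n → ℤ} {x y : Euc n}
    (hy : y ∈ cubeQ n ν m d) (hk : k ((2:ℝ) ^ j • (x - y)) ≠ 0) :
    x ∈ cube n (fun i => (2:ℝ) ^ (-(ν:ℤ)) * (m i : ℝ)) ((2 * R + d) * (2:ℝ) ^ (-(j:ℤ))) := by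
  intro i
  have h1 := hy i
  have h2 : ‖((2:ℝ) ^ j • (x - y)) i‖ ≤ R := (PiLp.norm_apply_le _ i).trans (hR _ hk)
  have h3 : |x i - y i| ≤ R * (2:ℝ) ^ (-(j:ℤ)) := by
    rw [zpow_neg, zpow_natCast, ← div_eq_mul_inv, le_div_iff₀ (by positivity)]
    simpa [abs_mul, mul_comm] using h2
  have h4 : (2:ℝ) ^ (-(ν:ℤ)) ≤ (2:ℝ) ^ (-(j:ℤ)) :=
    zpow_le_zpow_right₀ (by norm_num) (by omega)
  have h5 := mul_le_mul_of_nonneg_left h4 hd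
  have h6 := abs_sub_le (x i) (y i) ((2:ℝ) ^ (-(ν:ℤ)) * (m i : ℝ))
  linarith

/-- Convolution estimate for local means against atoms, `j ≤ ν`: if `k ∈ 𝒞^L(ℝⁿ)` has
compact support, `k_j = 2^{jn} k(2^j ·)`, and `a` is integrable, supported in `d·Q_{ν,m}`
and satisfies the general moment condition with exponent `κ = s + L + n(1-1/p)`, then
`|(k_j ∗ a)(x)| ≤ C'·C·2^{-js}·2^{-(ν-j)(L+s)}·2^{νn/p}·2^{-(ν-j)n}·1_B(x)` where `B` is the
cube with center `2^{-ν}m` and side length `c·2^{-j}`. -/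
theorem statement_16 (n : ℕ) (s : ℝ) (p : ℝ≥0∞) (hp : 0 < p) (L d : ℝ)
    (hL : 0 < L) (hd : 1 < d)
    (k : Euc n → ℂ) (hk : MemHolderSpace n L k) (hks : HasCompactSupport k) :
    ∃ c > (0:ℝ), ∃ C' > (0:ℝ), ∀ (j ν : ℕ), j ≤ ν → ∀ (m : Fin n → ℤ) (C : ℝ), 0 < C →
      ∀ a : Euc n → ℂ, Integrable a volume →
        Function.support a ⊆ cubeQ n ν m d →
        (∀ ψ : Euc n → ℂ, MemHolderSpace n L ψ →
          ‖∫ x, ψ x * a x‖ ≤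
            C * (2:ℝ) ^ (-(ν:ℝ) * (s + L + n * (1 - (p⁻¹).toReal))) *
              (holderNorm n L ψ).toReal) →
        ∀ x : Euc n,
          ‖∫ y : Euc n, ((2:ℝ) ^ (j * n) • k ((2:ℝ) ^ j • (x - y))) * a y‖ ≤
            C' * C * (2:ℝ) ^ (-(j:ℝ) * s) * (2:ℝ) ^ (-((ν:ℝ) - (j:ℝ)) * (L + s)) *
              (2:ℝ) ^ ((ν:ℝ) * n * (p⁻¹).toReal) * (2:ℝ) ^ (-((ν:ℝ) - (j:ℝ)) * n) *
              (cube n (fun i => (2:ℝ) ^ (-(ν:ℤ)) * (m i : ℝ))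
                  (c * (2:ℝ) ^ (-(j:ℤ)))).indicator (fun _ => (1:ℝ)) x := by
  obtain ⟨R, hRpos, hR⟩ := hks.isCompact.isBounded.exists_pos_norm_le
  have hR' : ∀ z, k z ≠ 0 → ‖z‖ ≤ R := fun z hz => hR z (subset_tsupport k hz)
  refine ⟨2 * R + d, by linarith, (holderNorm n L k).toReal + 1, by positivity, ?_⟩
  intro j ν hjν m C hC a _ hsupp hmom x
  by_cases hx : x ∈ cube n (fun i => (2:ℝ) ^ (-(ν:ℤ)) * (m i : ℝ))
      ((2 * R + d) * (2:ℝ) ^ (-(j:ℤ)))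
  · rw [Set.indicator_of_mem hx, mul_one]
    have hkc := hk.1.2 hL.ne'
    have hle := holderNorm_dilate_le hL hkc (A := (2:ℝ) ^ (j * n)) (r := (2:ℝ) ^ j)
      (by positivity) (one_le_pow₀ (by norm_num)) x
    have hfin : ENNReal.ofReal ((2:ℝ) ^ (j * n) * ((2:ℝ) ^ j) ^ L) * holderNorm n L k < ⊤ :=
      ENNReal.mul_lt_top ENNReal.ofReal_lt_top hk.2
    have hmem : MemHolderSpace n L (fun y => (2:ℝ) ^ (j * n) • k ((2:ℝ) ^ j • (x - y))) :=
      ⟨⟨fun h => absurd h hL.ne', fun _ => (hkc.comp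
        ((contDiff_const.sub contDiff_id).const_smul _)).const_smul _⟩, hle.trans_lt hfin⟩
    have hle' := ENNReal.toReal_mono hfin.ne hle
    rw [ENNReal.toReal_mul, ENNReal.toReal_ofReal (by positivity)] at hle'
    refine (hmom _ hmem).trans ?_
    have hpow : (2:ℝ) ^ (-(ν:ℝ) * (s + L + n * (1 - (p⁻¹).toReal))) *
          ((2:ℝ) ^ (j * n) * ((2:ℝ) ^ j) ^ L) =
        (2:ℝ) ^ (-(j:ℝ) * s) * (2:ℝ) ^ (-((ν:ℝ) - (j:ℝ)) * (L + s)) *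
          (2:ℝ) ^ ((ν:ℝ) * n * (p⁻¹).toReal) * (2:ℝ) ^ (-((ν:ℝ) - (j:ℝ)) * n) := by
      have h2 : (0:ℝ) < 2 := by norm_num
      rw [← Real.rpow_natCast 2 (j * n), ← Real.rpow_natCast 2 j, ← Real.rpow_mul h2.le,
        ← Real.rpow_add h2, ← Real.rpow_add h2, ← Real.rpow_add h2, ← Real.rpow_add h2,
        ← Real.rpow_add h2]
      congr 1
      push_cast
      ring
    calc C * (2:ℝ) ^ (-(ν:ℝ) * (s + L + n * (1 - (p⁻¹).toReal))) * _
        ≤ C * (2:ℝ) ^ (-(ν:ℝ) * (s + L + n * (1 - (p⁻¹).toReal))) *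
          ((2:ℝ) ^ (j * n) * ((2:ℝ) ^ j) ^ L * ((holderNorm n L k).toReal + 1)) := by
          refine mul_le_mul_of_nonneg_left (hle'.trans ?_) (by positivity)
          gcongr
          linarith
      _ = ((holderNorm n L k).toReal + 1) * C *
          ((2:ℝ) ^ (-(ν:ℝ) * (s + L + n * (1 - (p⁻¹).toReal))) *
            ((2:ℝ) ^ (j * n) * ((2:ℝ) ^ j) ^ L)) := by ring
      _ = _ := by rw [hpow]; ring
  · rw [Set.indicator_of_notMem hx, mul_zero]
    have hz : ∀ y, ((2:ℝ) ^ (j * n) • k ((2:ℝ) ^ j • (x - y))) * a y = 0 := by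
      intro y
      by_cases hy : a y = 0
      · rw [hy, mul_zero]
      have : k ((2:ℝ) ^ j • (x - y)) = 0 := by
        by_contra hne
        exact hx (mem_cube_of_ne_zero (by linarith) hR' hjν (hsupp hy) hne)
      rw [this, smul_zero, zero_mul]
    simp only [hz, integral_zero, norm_zero, le_refl]
end
end
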